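/- Fix an integer d ≥ 3 and a real p with 1/(d-1) < p < 1, and let q ∈ [0,1) satisfy q = (1-p+pq)^{d-1}. Set θ₁ = 1 − q(1−p) − p q² and η₁ = (1/2) p d (1 − q²). Then for every ε > 0 and b > 0 there exist c, C, R > 0 such that: if 𝒢 is a regular (b,d)-expander on n vertices with girth at least R, then with probability at least 1 − C·exp(−c n), the random graph G ∼ 𝒢_p satisfies | |V(C₁(G))|/n − θ₁ | < ε and | |E(C₁(G))|/n − η₁ | < ε, where C₁(G) is a largest connected component of G. -/

import Mathlib

open scoped Classical symmDiff

noncomputable section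

namespace Percolation

variable {V : Type} [Fintype V] [DecidableEq V]

/-- The edge set of `G` as a finset. -/
noncomputable def edgeFinset' (G : SimpleGraph V) : Finset (Sym2 V) :=
  Finset.univ.filter (· ∈ G.edgeSet)

/-- Probability that bond percolation on `G` with parameter `p` produces a spanning
subgraph satisfying `P`. -/
noncomputable def percProb (G : SimpleGraph V) (p : ℝ) (P : SimpleGraph V → Prop) : ℝ :=
  ∑ s ∈ (edgeFinset' G).powerset,
    (p ^ s.card * (1 - p) ^ ((edgeFinset' G).card - s.card)) *
      (if P (SimpleGraph.fromEdgeSet (↑s)) then 1 else 0)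

/-- Joint probability for two independent bond percolations on `G`. -/
noncomputable def percProb2 (G : SimpleGraph V) (p₁ p₂ : ℝ)
    (P : SimpleGraph V → SimpleGraph V → Prop) : ℝ :=
  ∑ s ∈ (edgeFinset' G).powerset, ∑ t ∈ (edgeFinset' G).powerset,
    (p₁ ^ s.card * (1 - p₁) ^ ((edgeFinset' G).card - s.card)) *
    (p₂ ^ t.card * (1 - p₂) ^ ((edgeFinset' G).card - t.card)) *
      (if P (SimpleGraph.fromEdgeSet (↑s)) (SimpleGraph.fromEdgeSet (↑t)) then 1 else 0)

/-- Number of edges of `G` joining `S` to its complement. -/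
noncomputable def cutCard (G : SimpleGraph V) (S : Finset V) : ℕ :=
  ((edgeFinset' G).filter (fun e => ∃ x ∈ S, ∃ y, y ∉ S ∧ e = s(x, y))).card

/-- `G` is a `(b,d)`-expander: max degree at most `d`, and every vertex set of size at most
`n/2` has at least `b|S|` edges to its complement. -/
def IsExpander (G : SimpleGraph V) (b : ℝ) (d : ℕ) : Prop :=
  (∀ v, (G.neighborSet v).ncard ≤ d) ∧
  ∀ S : Finset V, (S.card : ℝ) ≤ Fintype.card V / 2 → b * S.card ≤ cutCard G S

/-- `G` is a regular `(b,d)`-expander. -/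
def IsRegularExpander (G : SimpleGraph V) (b : ℝ) (d : ℕ) : Prop :=
  IsExpander G b d ∧ ∀ v, (G.neighborSet v).ncard = d

/-- The vertices of the connected component `c` of `G`. -/
noncomputable def compVerts (G : SimpleGraph V) (c : G.ConnectedComponent) : Finset V :=
  Finset.univ.filter (fun v => G.connectedComponentMk v = c)

/-- The edges of the connected component `c` of `G`. -/
noncomputable def compEdges (G : SimpleGraph V) (c : G.ConnectedComponent) : Finset (Sym2 V) :=
  (edgeFinset' G).filter (fun e => ∀ v ∈ e, G.connectedComponentMk v = c)

/-- `c` is a largest connected component of `G`. -/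
def IsLargestComp (G : SimpleGraph V) (c : G.ConnectedComponent) : Prop :=
  ∀ c' : G.ConnectedComponent, (compVerts G c').card ≤ (compVerts G c).card

/-- The 2-core of the connected component `c` of `G` : the maximal subgraph of `G`
supported inside `c` all of whose vertices have degree at least 2. -/
noncomputable def twoCoreComp (G : SimpleGraph V) (c : G.ConnectedComponent) : SimpleGraph V :=
  sSup {H : SimpleGraph V | H ≤ G ∧ (∀ v ∈ H.support, G.connectedComponentMk v = c) ∧
    ∀ v ∈ H.support, 2 ≤ (H.neighborSet v).ncard}

/-- The event `A^R_{x,y}(H)`: the connected component of `y` in `H` with the edge `xy`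
removed (if present) has at least `R` vertices. -/
def eventA (H : SimpleGraph V) (R : ℕ) (x y : V) : Prop :=
  R ≤ (compVerts (H.deleteEdges {s(x, y)})
        ((H.deleteEdges {s(x, y)}).connectedComponentMk y)).card

/-- `E₁(H)`: edges `xy` of `H` such that `A^R_{x,y}` or `A^R_{y,x}` holds. -/
noncomputable def E1set (H : SimpleGraph V) (R : ℕ) : Finset (Sym2 V) :=
  (edgeFinset' H).filter (fun e => ∃ x y, e = s(x, y) ∧ (eventA H R x y ∨ eventA H R y x))

/-- `V₁(H)`: vertices `x` such that for some `y`, `xy ∈ E(H)` and `A^R_{x,y}` holds. -/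
noncomputable def V1set (H : SimpleGraph V) (R : ℕ) : Finset V :=
  Finset.univ.filter (fun x => ∃ y, H.Adj x y ∧ eventA H R x y)

/-- `E₂(H)`: edges `xy` of `H` such that both `A^R_{x,y}` and `A^R_{y,x}` hold. -/
noncomputable def E2set (H : SimpleGraph V) (R : ℕ) : Finset (Sym2 V) :=
  (edgeFinset' H).filter (fun e => ∃ x y, e = s(x, y) ∧ eventA H R x y ∧ eventA H R y x)

/-- `V₂(H)`: vertices incident to an edge of `E₂(H)`. -/
noncomputable def V2set (H : SimpleGraph V) (R : ℕ) : Finset V :=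
  Finset.univ.filter (fun x => ∃ e ∈ E2set H R, x ∈ e)

/-- `V̄₁(H)`: vertices `y` such that `A^R_{x,y}(H)` holds for some `x`. -/
noncomputable def Vbar1 (H : SimpleGraph V) (R : ℕ) : Finset V :=
  Finset.univ.filter (fun y => ∃ x, eventA H R x y)

/-- `S` is `k`-thick in `H`: a union of pairwise disjoint subsets, each of size at least
`k`, each inducing a connected subgraph of `H`. -/
def IsThick (H : SimpleGraph V) (k : ℕ) (S : Finset V) : Prop :=
  ∃ P : Finset (Finset V),
    (∀ T ∈ P, k ≤ T.card ∧ (H.induce (↑T : Set V)).Connected) ∧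
    (↑P : Set (Finset V)).PairwiseDisjoint id ∧ S = P.biUnion id

/-- `S` is a separator of `K`. -/
def IsSeparator {W : Type} [Fintype W] (K : SimpleGraph W) (S : Finset W) : Prop :=
  ∃ A B : Finset W, Disjoint A B ∧ Disjoint A S ∧ Disjoint B S ∧
    (∀ w, w ∈ A ∨ w ∈ B ∨ w ∈ S) ∧
    (∀ a ∈ A, ∀ b ∈ B, ¬ K.Adj a b) ∧
    3 * A.card ≤ 2 * Fintype.card W ∧ 3 * B.card ≤ 2 * Fintype.card W

/-!
Write `p` as the union of two independent rounds, an edge density `p' < p` followed by a sprinkling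
of density `δ`. Up to any fixed depth `k`, large girth makes the exploration from a vertex a
branching process in which every individual has `d - 1` potential children, so the probability that
a given direction dies out tends to the fixed point `α = 1 - p + p q` of
`x ↦ 1 - p + p x ^ (d - 1)`. Hence about `(1 - α ^ d) n = θ₁ n` vertices start an open path of
length `k + 1`, and the sum of their open degrees is about `2 η₁ n`. Retaining or closing one edge
changes these numbers by a constant, so they concentrate exponentially.

Vertices off long paths lie in components of bounded size, so a component with linearly many
vertices is contained in the set of vertices on long paths. Conversely, if the long paths are
already present after the first round, they fall into at most `n / k` components. In an expander,
two linear sized unions of these components are joined by linearly many edge-disjoint paths of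
bounded length, so the sprinkling fails to connect them with probability exponentially small in
`n`, at a rate that does not depend on `k`; for large `k` this beats the `2 ^ (n / k)` ways of
choosing the unions. Therefore the largest component contains nearly all vertices on long paths.
-/

section BernoulliSubset

variable {α : Type*}

/-- The expectation of `f s` for the random subset `s` of `E` that contains each element of `E`
independently with probability `p`. The explicit sum is the one used by `percProb`. -/
def bernExp (p : ℝ) (E : Finset α) (f : Finset α → ℝ) : ℝ :=
  ∑ s ∈ E.powerset, p ^ s.card * (1 - p) ^ (E.card - s.card) * f s

/-- The probability of the event `P` for the random subset of `E` that contains each element of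
`E` independently with probability `p`. -/
def bernProb (p : ℝ) (E : Finset α) (P : Finset α → Prop) : ℝ :=
  bernExp p E fun s => if P s then 1 else 0

/-- `f s` depends only on which elements of `T` belong to `s`. -/
def DepOn {β : Type*} (T : Finset α) (f : Finset α → β) : Prop :=
  ∀ ⦃s s' : Finset α⦄, (∀ e ∈ T, e ∈ s ↔ e ∈ s') → f s = f s'

variable {p : ℝ} {E : Finset α}

@[simp]
lemma bernExp_empty (p : ℝ) (f : Finset α → ℝ) : bernExp p ∅ f = f ∅ := by
  simp [bernExp]

lemma bernExp_congr {f g : Finset α → ℝ} (h : ∀ s ⊆ E, f s = g s) :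
    bernExp p E f = bernExp p E g :=
  Finset.sum_congr rfl fun s hs => by rw [h s (Finset.mem_powerset.1 hs)]

lemma bernExp_mono (hp : p ∈ Set.Icc 0 1) {f g : Finset α → ℝ} (h : ∀ s ⊆ E, f s ≤ g s) :
    bernExp p E f ≤ bernExp p E g := by
  have hp0 := hp.1
  have hp1 : 0 ≤ 1 - p := sub_nonneg.2 hp.2
  exact Finset.sum_le_sum fun s hs =>
    mul_le_mul_of_nonneg_left (h s (Finset.mem_powerset.1 hs)) (by positivity)

lemma bernExp_add (p : ℝ) (E : Finset α) (f g : Finset α → ℝ) :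
    bernExp p E (fun s => f s + g s) = bernExp p E f + bernExp p E g := by
  simp only [bernExp, mul_add, Finset.sum_add_distrib]

lemma bernExp_const_mul (p : ℝ) (E : Finset α) (c : ℝ) (f : Finset α → ℝ) :
    bernExp p E (fun s => c * f s) = c * bernExp p E f := by
  simp only [bernExp, Finset.mul_sum, mul_left_comm c]

lemma bernExp_mul_const (p : ℝ) (E : Finset α) (c : ℝ) (f : Finset α → ℝ) :
    bernExp p E (fun s => f s * c) = bernExp p E f * c := by
  simp only [mul_comm _ c, bernExp_const_mul]

lemma bernExp_neg (p : ℝ) (E : Finset α) (f : Finset α → ℝ) :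
    bernExp p E (fun s => -f s) = -bernExp p E f := by
  simp only [bernExp, mul_neg, Finset.sum_neg_distrib]

lemma bernExp_sub (p : ℝ) (E : Finset α) (f g : Finset α → ℝ) :
    bernExp p E (fun s => f s - g s) = bernExp p E f - bernExp p E g := by
  simp only [sub_eq_add_neg, bernExp_add, bernExp_neg]

lemma bernExp_sum {ι : Type*} (p : ℝ) (E : Finset α) (I : Finset ι) (f : ι → Finset α → ℝ) :
    bernExp p E (fun s => ∑ i ∈ I, f i s) = ∑ i ∈ I, bernExp p E (f i) := by
  simp only [bernExp, Finset.mul_sum]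
  exact Finset.sum_comm

lemma DepOn.comp {β γ : Type*} {T : Finset α} {f : Finset α → β} (h : DepOn T f) (φ : β → γ) :
    DepOn T fun s => φ (f s) :=
  fun _ _ hs => congrArg φ (h hs)

lemma DepOn.map₂ {β γ δ : Type*} {T : Finset α} {f : Finset α → β} {g : Finset α → γ}
    (hf : DepOn T f) (hg : DepOn T g) (φ : β → γ → δ) : DepOn T fun s => φ (f s) (g s) :=
  fun _ _ hs => congrArg₂ φ (hf hs) (hg hs)

lemma DepOn.forall_mem {ι : Type*} [DecidableEq α] {I : Finset ι} {T : ι → Finset α}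
    {P : ι → Finset α → Prop} (h : ∀ i ∈ I, DepOn (T i) (P i)) :
    DepOn (I.biUnion T) fun s => ∀ i ∈ I, P i s :=
  fun _ _ hs => propext <| forall₂_congr fun i hi =>
    (h i hi fun e he => hs e (Finset.mem_biUnion.2 ⟨i, hi, he⟩)).to_iff

lemma depOn_mem (a : α) : DepOn {a} fun s => a ∈ s :=
  fun _ _ h => propext (h a (Finset.mem_singleton_self a))

lemma bernExp_insert [DecidableEq α] (p : ℝ) {a : α} (ha : a ∉ E) (f : Finset α → ℝ) :
    bernExp p (insert a E) f =
      (1 - p) * bernExp p E f + p * bernExp p E (fun s => f (insert a s)) := by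
  unfold bernExp
  rw [Finset.sum_powerset_insert ha, Finset.mul_sum, Finset.mul_sum]
  congr 1 <;> refine Finset.sum_congr rfl fun s hs => ?_
  · have hsE := Finset.card_le_card (Finset.mem_powerset.1 hs)
    rw [Finset.card_insert_of_notMem ha, Nat.succ_sub hsE, pow_succ]
    ring
  · have has : a ∉ s := fun h => ha (Finset.mem_powerset.1 hs h)
    rw [Finset.card_insert_of_notMem ha, Finset.card_insert_of_notMem has,
      Nat.add_sub_add_right, pow_succ]
    ring

lemma bernExp_const (p : ℝ) (E : Finset α) (c : ℝ) : bernExp p E (fun _ => c) = c := by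
  induction E using Finset.induction_on with
  | empty => simp
  | insert a E ha ih => rw [bernExp_insert p ha, ih]; ring

lemma le_bernExp (hp : p ∈ Set.Icc 0 1) {f : Finset α → ℝ} {c : ℝ} (h : ∀ s ⊆ E, c ≤ f s) :
    c ≤ bernExp p E f :=
  (bernExp_const p E c).ge.trans (bernExp_mono hp h)

lemma bernExp_le (hp : p ∈ Set.Icc 0 1) {f : Finset α → ℝ} {c : ℝ} (h : ∀ s ⊆ E, f s ≤ c) :
    bernExp p E f ≤ c :=
  (bernExp_mono hp h).trans (bernExp_const p E c).le

lemma bernExp_union [DecidableEq α] (p : ℝ) {E F : Finset α} (h : Disjoint E F)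
    (f : Finset α → ℝ) :
    bernExp p (E ∪ F) f = bernExp p E (fun s => bernExp p F (fun t => f (s ∪ t))) := by
  induction E using Finset.induction_on generalizing f with
  | empty => simp
  | insert a E ha ih =>
    have hd := Finset.disjoint_insert_left.1 h
    rw [Finset.insert_union, bernExp_insert p (by simp [ha, hd.1]), bernExp_insert p ha, ih hd.2,
      ih hd.2]
    simp only [Finset.insert_union]

lemma bernExp_sprinkle [DecidableEq α] (p₁ p₂ : ℝ) (E : Finset α) (f : Finset α → ℝ) :
    bernExp p₁ E (fun s => bernExp p₂ E (fun t => f (s ∪ t))) =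
      bernExp (1 - (1 - p₁) * (1 - p₂)) E f := by
  induction E using Finset.induction_on generalizing f with
  | empty => simp
  | insert a E ha ih =>
    simp only [bernExp_insert _ ha, Finset.union_insert, Finset.insert_union, Finset.insert_idem,
      bernExp_add, bernExp_const_mul]
    rw [ih, ih (fun s => f (insert a s))]
    ring

lemma DepOn.bernExp_inter [DecidableEq α] {T : Finset α} {f : Finset α → ℝ} (hf : DepOn T f)
    (p : ℝ) (E : Finset α) : bernExp p (E ∩ T) f = bernExp p E f := by
  have htrace : ∀ s, ∀ t ⊆ E \ T, f (s ∪ t) = f s := fun s t ht => hf fun e he => by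
    have : e ∉ t := fun h => (Finset.mem_sdiff.1 (ht h)).2 he
    simp [this]
  calc bernExp p (E ∩ T) f
      = bernExp p (E ∩ T) (fun s => bernExp p (E \ T) (fun t => f (s ∪ t))) :=
        bernExp_congr fun s _ => by rw [bernExp_congr (htrace s), bernExp_const]
    _ = bernExp p E f := by
        rw [← bernExp_union p (Finset.disjoint_sdiff_inter E T).symm, Finset.union_comm,
          Finset.sdiff_union_inter]

lemma DepOn.bernExp_mul {T₁ T₂ : Finset α} {f g : Finset α → ℝ} (hf : DepOn T₁ f)
    (hg : DepOn T₂ g) (h : Disjoint T₁ T₂) (p : ℝ) (E : Finset α) :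
    bernExp p E (fun s => f s * g s) = bernExp p E f * bernExp p E g := by
  have hfun : ∀ s ⊆ E ∩ T₁, ∀ t ⊆ E \ T₁, f (s ∪ t) * g (s ∪ t) = f s * g t := by
    intro s hs t ht
    congr 1
    · refine hf fun e he => ?_
      have : e ∉ t := fun h' => (Finset.mem_sdiff.1 (ht h')).2 he
      simp [this]
    · refine hg fun e he => ?_
      have : e ∉ s := fun h' => Finset.disjoint_left.1 h (Finset.mem_inter.1 (hs h')).2 he
      simp [this]
  have hinter : (E \ T₁) ∩ T₂ = E ∩ T₂ := by
    rw [Finset.sdiff_inter_right_comm, Finset.sdiff_eq_self_of_disjoint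
      (h.symm.mono_left Finset.inter_subset_right)]
  calc bernExp p E (fun s => f s * g s)
      = bernExp p (E ∩ T₁) (fun s => bernExp p (E \ T₁) (fun t => f (s ∪ t) * g (s ∪ t))) := by
        rw [← bernExp_union p (Finset.disjoint_sdiff_inter E T₁).symm
          (fun s => f s * g s), Finset.union_comm, Finset.sdiff_union_inter]
    _ = bernExp p (E ∩ T₁) (fun s => f s * bernExp p (E \ T₁) g) :=
        bernExp_congr fun s hs => by rw [bernExp_congr (hfun s hs), bernExp_const_mul]
    _ = bernExp p E f * bernExp p E g := by
        rw [bernExp_mul_const, hf.bernExp_inter, ← hg.bernExp_inter, hinter, hg.bernExp_inter]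

lemma bernProb_mono (hp : p ∈ Set.Icc 0 1) {P Q : Finset α → Prop} (h : ∀ s ⊆ E, P s → Q s) :
    bernProb p E P ≤ bernProb p E Q :=
  bernExp_mono hp fun s hs => by
    split_ifs with hP hQ
    exacts [le_rfl, absurd (h s hs hP) hQ, zero_le_one, le_rfl]

lemma bernProb_not (p : ℝ) (E : Finset α) (P : Finset α → Prop) :
    bernProb p E (fun s => ¬ P s) = 1 - bernProb p E P := by
  rw [eq_sub_iff_add_eq, bernProb, bernProb, ← bernExp_add]
  exact (bernExp_congr fun s _ => by by_cases h : P s <;> simp [h]).trans (bernExp_const p E 1)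

lemma bernProb_exists_le (hp : p ∈ Set.Icc 0 1) {ι : Type*} (I : Finset ι)
    (P : ι → Finset α → Prop) :
    bernProb p E (fun s => ∃ i ∈ I, P i s) ≤ ∑ i ∈ I, bernProb p E (P i) := by
  unfold bernProb
  rw [← bernExp_sum]
  refine bernExp_mono hp fun s _ => ?_
  have hnonneg : ∀ i ∈ I, (0 : ℝ) ≤ if P i s then 1 else 0 := fun i _ => by
    split_ifs <;> norm_num
  split_ifs with h
  · obtain ⟨i, hi, hP⟩ := h
    exact (if_pos hP).ge.trans (Finset.single_le_sum hnonneg hi)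
  · exact Finset.sum_nonneg hnonneg

lemma bernProb_or_le (hp : p ∈ Set.Icc 0 1) (P Q : Finset α → Prop) :
    bernProb p E (fun s => P s ∨ Q s) ≤ bernProb p E P + bernProb p E Q := by
  unfold bernProb
  rw [← bernExp_add]
  refine bernExp_mono hp fun s _ => ?_
  by_cases hP : P s <;> by_cases hQ : Q s <;> simp [hP, hQ]

lemma bernProb_and_of_depOn {T₁ T₂ : Finset α} {P Q : Finset α → Prop} (hP : DepOn T₁ P)
    (hQ : DepOn T₂ Q) (h : Disjoint T₁ T₂) (p : ℝ) (E : Finset α) :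
    bernProb p E (fun s => P s ∧ Q s) = bernProb p E P * bernProb p E Q := by
  unfold bernProb
  rw [← (hP.comp fun b => if b then (1 : ℝ) else 0).bernExp_mul
    (hQ.comp fun b => if b then (1 : ℝ) else 0) h]
  refine bernExp_congr fun s _ => ?_
  by_cases hP : P s <;> by_cases hQ : Q s <;> simp [hP, hQ]

lemma bernProb_and_not (p : ℝ) (E : Finset α) (P Q : Finset α → Prop) :
    bernProb p E (fun s => P s ∧ ¬ Q s) =
      bernProb p E P - bernProb p E (fun s => P s ∧ Q s) := by
  rw [bernProb, bernProb, bernProb, ← bernExp_sub]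
  refine bernExp_congr fun s _ => ?_
  by_cases hP : P s <;> by_cases hQ : Q s <;> simp [hP, hQ]

lemma bernProb_forall_of_depOn {ι : Type*} {I : Finset ι} {T : ι → Finset α}
    {P : ι → Finset α → Prop} (hP : ∀ i ∈ I, DepOn (T i) (P i))
    (hT : (I : Set ι).PairwiseDisjoint T) (p : ℝ) (E : Finset α) :
    bernProb p E (fun s => ∀ i ∈ I, P i s) = ∏ i ∈ I, bernProb p E (P i) := by
  induction I using Finset.induction_on with
  | empty => simp [bernProb, bernExp_const]
  | insert a I ha ih =>
    rw [Finset.forall_mem_insert] at hP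
    rw [Finset.coe_insert, Set.pairwiseDisjoint_insert_of_notMem (by simpa using ha)] at hT
    simp only [Finset.forall_mem_insert, Finset.prod_insert ha]
    rw [bernProb_and_of_depOn hP.1 (.forall_mem hP.2)
      ((Finset.disjoint_biUnion_right _ _ _).2 hT.2), ih hP.2 hT.1]

lemma bernProb_mem (p : ℝ) {a : α} (ha : a ∈ E) : bernProb p E (fun s => a ∈ s) = p := by
  have hout : bernProb p (E.erase a) (fun s => a ∈ s) = 0 :=
    (bernExp_congr fun s hs => if_neg fun h => Finset.notMem_erase a E (hs h)).trans
      (bernExp_const _ _ 0)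
  have hin : bernProb p (E.erase a) (fun s => a ∈ insert a s) = 1 :=
    (bernExp_congr fun s _ => if_pos (Finset.mem_insert_self a s)).trans (bernExp_const _ _ 1)
  calc bernProb p E (fun s => a ∈ s)
      = (1 - p) * bernProb p (E.erase a) (fun s => a ∈ s) +
          p * bernProb p (E.erase a) (fun s => a ∈ insert a s) := by
        rw [bernProb, ← Finset.insert_erase ha, bernExp_insert p (Finset.notMem_erase a E),
          Finset.erase_insert (Finset.notMem_erase a E)]
        rfl
    _ = p := by rw [hout, hin]; ring

lemma bernProb_subset (p : ℝ) {F : Finset α} (hF : F ⊆ E) :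
    bernProb p E (fun s => F ⊆ s) = p ^ F.card := by
  have h := bernProb_forall_of_depOn (I := F) (T := fun a => {a}) (fun a _ => depOn_mem a)
    (fun a _ b _ hab => Finset.disjoint_singleton.2 hab) p E
  rwa [Finset.prod_congr rfl fun a ha => bernProb_mem p (hF ha), Finset.prod_const] at h

end BernoulliSubset

section BoundedDifferences

variable {α : Type*} {p : ℝ}

lemma exp_two_point_le (hp : p ∈ Set.Icc 0 1) {x y r : ℝ} (hr : r ≤ 1) (hx : |x| ≤ r)
    (hy : |y| ≤ r) (hmean : (1 - p) * x + p * y = 0) :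
    (1 - p) * Real.exp x + p * Real.exp y ≤ Real.exp (r ^ 2) := by
  have hexp : ∀ z : ℝ, |z| ≤ r → Real.exp z ≤ 1 + z + r ^ 2 := fun z hz => by
    have hquad := (abs_le.1 (Real.abs_exp_sub_one_sub_id_le (hz.trans hr))).2
    have hsq : z ^ 2 ≤ r ^ 2 := by rw [← sq_abs z]; gcongr
    linarith
  calc (1 - p) * Real.exp x + p * Real.exp y
      ≤ (1 - p) * (1 + x + r ^ 2) + p * (1 + y + r ^ 2) :=
        add_le_add (mul_le_mul_of_nonneg_left (hexp x hx) (sub_nonneg.2 hp.2))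
          (mul_le_mul_of_nonneg_left (hexp y hy) hp.1)
    _ = r ^ 2 + 1 := by linear_combination hmean
    _ ≤ Real.exp (r ^ 2) := Real.add_one_le_exp _

lemma exp_two_point_centered_le (hp : p ∈ Set.Icc 0 1) {c t x y : ℝ} (ht : 0 ≤ t)
    (htc : t * c ≤ 1) (hxy : |y - x| ≤ c) :
    (1 - p) * Real.exp (t * (x - ((1 - p) * x + p * y))) +
      p * Real.exp (t * (y - ((1 - p) * x + p * y))) ≤ Real.exp ((t * c) ^ 2) := by
  have hbound : ∀ w ∈ Set.Icc (0 : ℝ) 1, |t * (w * (y - x))| ≤ t * c := fun w hw => by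
    rw [abs_mul, abs_of_nonneg ht, abs_mul, abs_of_nonneg hw.1]
    exact mul_le_mul_of_nonneg_left ((mul_le_of_le_one_left (abs_nonneg _) hw.2).trans hxy) ht
  refine exp_two_point_le hp htc ?_ ?_ (by ring)
  · rw [show t * (x - ((1 - p) * x + p * y)) = -(t * (p * (y - x))) by ring, abs_neg]
    exact hbound p hp
  · rw [show t * (y - ((1 - p) * x + p * y)) = t * ((1 - p) * (y - x)) by ring]
    exact hbound (1 - p) ⟨sub_nonneg.2 hp.2, sub_le_self 1 hp.1⟩

lemma bernExp_exp_centered_le [DecidableEq α] (hp : p ∈ Set.Icc 0 1) {c t : ℝ} (ht : 0 ≤ t)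
    (htc : t * c ≤ 1) (E : Finset α) {f : Finset α → ℝ} (hf : ∀ e s, |f (insert e s) - f s| ≤ c) :
    bernExp p E (fun s => Real.exp (t * (f s - bernExp p E f))) ≤
      Real.exp ((t * c) ^ 2 * E.card) := by
  induction E using Finset.induction_on generalizing f with
  | empty => simp
  | insert a E ha ih =>
    set m₀ := bernExp p E f
    set m₁ := bernExp p E fun s => f (insert a s)
    set m := (1 - p) * m₀ + p * m₁
    have hm : |m₁ - m₀| ≤ c := by
      rw [abs_le, ← bernExp_sub]
      exact ⟨le_bernExp hp fun s _ => (abs_le.1 (hf a s)).1,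
        bernExp_le hp fun s _ => (abs_le.1 (hf a s)).2⟩
    have hshift : ∀ (g : Finset α → ℝ) (m' : ℝ),
        bernExp p E (fun s => Real.exp (t * (g s - m))) =
          Real.exp (t * (m' - m)) * bernExp p E (fun s => Real.exp (t * (g s - m'))) := by
      intro g m'
      rw [← bernExp_const_mul]
      exact bernExp_congr fun s _ => by rw [← Real.exp_add]; ring_nf
    have ih₀ := ih hf
    have ih₁ := ih (f := fun s => f (insert a s)) fun e s => by
      rw [Finset.insert_comm]; exact hf e (insert a s)
    have hp1 : 0 ≤ 1 - p := sub_nonneg.2 hp.2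
    have hp0 := hp.1
    rw [bernExp_insert p ha, bernExp_insert p ha, hshift f m₀, hshift _ m₁]
    calc (1 - p) * (Real.exp (t * (m₀ - m)) * _) + p * (Real.exp (t * (m₁ - m)) * _)
        ≤ (1 - p) * (Real.exp (t * (m₀ - m)) * Real.exp ((t * c) ^ 2 * E.card)) +
          p * (Real.exp (t * (m₁ - m)) * Real.exp ((t * c) ^ 2 * E.card)) := by gcongr
      _ = ((1 - p) * Real.exp (t * (m₀ - m)) + p * Real.exp (t * (m₁ - m))) *
          Real.exp ((t * c) ^ 2 * E.card) := by ring
      _ ≤ Real.exp ((t * c) ^ 2) * Real.exp ((t * c) ^ 2 * E.card) := by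
          gcongr; exact exp_two_point_centered_le hp ht htc hm
      _ = Real.exp ((t * c) ^ 2 * (insert a E).card) := by
          rw [← Real.exp_add, Finset.card_insert_of_notMem ha]; push_cast; ring_nf

lemma bernProb_le_sub_bernExp_le [DecidableEq α] (hp : p ∈ Set.Icc 0 1) {c t : ℝ} (ht : 0 ≤ t)
    (htc : t * c ≤ 1) (E : Finset α) {f : Finset α → ℝ}
    (hf : ∀ e s, |f (insert e s) - f s| ≤ c) (x : ℝ) :
    bernProb p E (fun s => x ≤ f s - bernExp p E f) ≤
      Real.exp ((t * c) ^ 2 * E.card - t * x) := by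
  calc bernProb p E (fun s => x ≤ f s - bernExp p E f)
      ≤ bernExp p E fun s => Real.exp (-(t * x)) * Real.exp (t * (f s - bernExp p E f)) := by
        refine bernExp_mono hp fun s _ => ?_
        split_ifs with h
        · rw [← Real.exp_add]
          exact Real.one_le_exp (by linarith [mul_le_mul_of_nonneg_left h ht])
        · positivity
    _ ≤ Real.exp (-(t * x)) * Real.exp ((t * c) ^ 2 * E.card) := by
        rw [bernExp_const_mul]
        gcongr
        exact bernExp_exp_centered_le hp ht htc E hf
    _ = Real.exp ((t * c) ^ 2 * E.card - t * x) := by rw [← Real.exp_add]; ring_nf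

lemma bernProb_le_abs_sub_bernExp_le [DecidableEq α] (hp : p ∈ Set.Icc 0 1) {c t : ℝ} (ht : 0 ≤ t)
    (htc : t * c ≤ 1) (E : Finset α) {f : Finset α → ℝ}
    (hf : ∀ e s, |f (insert e s) - f s| ≤ c) (x : ℝ) :
    bernProb p E (fun s => x ≤ |f s - bernExp p E f|) ≤
      2 * Real.exp ((t * c) ^ 2 * E.card - t * x) := by
  have hupper := bernProb_le_sub_bernExp_le hp ht htc E hf x
  have hlower := bernProb_le_sub_bernExp_le hp ht htc E (f := fun s => -f s)
    (fun e s => by rw [neg_sub_neg, abs_sub_comm]; exact hf e s) x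
  simp only [bernExp_neg, neg_sub_neg] at hlower
  calc bernProb p E (fun s => x ≤ |f s - bernExp p E f|)
      ≤ bernProb p E (fun s => x ≤ f s - bernExp p E f ∨ x ≤ bernExp p E f - f s) :=
        bernProb_mono hp fun s _ h => by rwa [le_abs, neg_sub] at h
    _ ≤ 2 * Real.exp ((t * c) ^ 2 * E.card - t * x) := by
        linarith [bernProb_or_le (E := E) hp (fun s => x ≤ f s - bernExp p E f)
          fun s => x ≤ bernExp p E f - f s]

lemma exists_bernProb_abs_sub_bernExp_le {c M r : ℝ} (hc : 0 < c) (hM : 0 < M) (hr : 0 < r) :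
    ∃ ρ > 0, ∀ {α : Type} [DecidableEq α] {p : ℝ} {E : Finset α} {n : ℝ} {f : Finset α → ℝ},
      p ∈ Set.Icc 0 1 → E.card ≤ M * n → (∀ e s, |f (insert e s) - f s| ≤ c) →
        bernProb p E (fun s => r * n ≤ |f s - bernExp p E f|) ≤ 2 * Real.exp (-ρ * n) := by
  set t := min (1 / c) (r / (2 * c ^ 2 * M))
  have ht : 0 < t := lt_min (by positivity) (by positivity)
  have htc : t * c ≤ 1 := (le_div_iff₀ hc).1 (min_le_left _ _)
  have htr : t * (2 * c ^ 2 * M) ≤ r := (le_div_iff₀ (by positivity)).1 (min_le_right _ _)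
  refine ⟨t * r / 2, by positivity, fun {α _ p E n f} hp hE hf => ?_⟩
  have hn : 0 ≤ n := nonneg_of_mul_nonneg_right ((Nat.cast_nonneg _).trans hE) hM
  refine (bernProb_le_abs_sub_bernExp_le hp ht.le htc E hf (r * n)).trans ?_
  gcongr
  calc (t * c) ^ 2 * E.card - t * (r * n)
      ≤ (t * c) ^ 2 * (M * n) - t * (r * n) := by gcongr
    _ = t * n / 2 * (t * (2 * c ^ 2 * M)) - t * (r * n) := by ring
    _ ≤ t * n / 2 * r - t * (r * n) := by gcongr
    _ = -(t * r / 2) * n := by ring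

end BoundedDifferences

section Girth

variable {W : Type*} {G : SimpleGraph W}

lemma isAcyclic_fromEdgeSet_of_card_lt_egirth {F : Finset (Sym2 W)}
    (hF : (F : Set (Sym2 W)) ⊆ G.edgeSet) (hcard : (F.card : ℕ∞) < G.egirth) :
    (SimpleGraph.fromEdgeSet (F : Set (Sym2 W))).IsAcyclic := by
  intro x c hc
  have hle : SimpleGraph.fromEdgeSet (F : Set (Sym2 W)) ≤ G := by
    simpa only [SimpleGraph.fromEdgeSet_edgeSet] using SimpleGraph.fromEdgeSet_mono hF
  have hsub : c.edges.toFinset ⊆ F := fun e he => by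
    have := c.edges_subset_edgeSet (List.mem_toFinset.1 he)
    rw [SimpleGraph.edgeSet_fromEdgeSet] at this
    exact this.1
  have hlen : c.length ≤ F.card := by
    rw [← c.length_edges, ← List.toFinset_card_of_nodup hc.edges_nodup]
    exact Finset.card_le_card hsub
  have hgirth : G.egirth ≤ c.length := by
    simpa using SimpleGraph.egirth_le_length (hc.mapLe hle)
  exact (hgirth.trans (Nat.cast_le.2 hlen)).not_gt hcard

lemma path_unique_of_lt_egirth {u v : W} {w₁ w₂ : G.Walk u v} (h₁ : w₁.IsPath)
    (h₂ : w₂.IsPath) (hlen : ((w₁.length + w₂.length : ℕ) : ℕ∞) < G.egirth) : w₁ = w₂ := by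
  set F : Finset (Sym2 W) := (w₁.edges ++ w₂.edges).toFinset with hF
  have hFG : (F : Set (Sym2 W)) ⊆ G.edgeSet := fun e he => by
    rw [Finset.mem_coe, hF, List.mem_toFinset, List.mem_append] at he
    exact he.elim (w₁.edges_subset_edgeSet ·) (w₂.edges_subset_edgeSet ·)
  have hcard : F.card ≤ w₁.length + w₂.length :=
    (List.toFinset_card_le _).trans_eq (by simp)
  have hacyclic := isAcyclic_fromEdgeSet_of_card_lt_egirth hFG
    ((Nat.cast_le.2 hcard).trans_lt hlen)
  have hmem : ∀ e ∈ w₁.edges ++ w₂.edges,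
      e ∈ (SimpleGraph.fromEdgeSet (F : Set (Sym2 W))).edgeSet := fun e he => by
    have heF : e ∈ (F : Set (Sym2 W)) := List.mem_toFinset.2 he
    rw [SimpleGraph.edgeSet_fromEdgeSet]
    exact ⟨heF, G.not_isDiag_of_mem_edgeSet (hFG heF)⟩
  have hpaths := (hacyclic.subsingleton_path u v).elim
    ⟨w₁.transfer _ fun e he => hmem e (List.mem_append_left _ he), h₁.transfer _⟩
    ⟨w₂.transfer _ fun e he => hmem e (List.mem_append_right _ he), h₂.transfer _⟩
  have hsupport := congrArg (fun q => q.1.support) hpaths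
  simp only [SimpleGraph.Walk.support_transfer] at hsupport
  exact SimpleGraph.Walk.ext_support hsupport

lemma snd_unique_of_lt_egirth {x y y' a : W} {h : G.Adj x y} {h' : G.Adj x y'}
    {w : G.Walk y a} {w' : G.Walk y' a} (hw : (w.cons h).IsPath) (hw' : (w'.cons h').IsPath)
    (hlen : ((w.length + w'.length + 2 : ℕ) : ℕ∞) < G.egirth) : y = y' := by
  have hcons : w.cons h = w'.cons h' := path_unique_of_lt_egirth hw hw' <| by
    rwa [SimpleGraph.Walk.length_cons, SimpleGraph.Walk.length_cons, add_add_add_comm]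
  simp only [SimpleGraph.Walk.cons.injEq] at hcons
  exact hcons.1

lemma isPath_cons_cons_of_lt_egirth {x y z a : W} (hxy : G.Adj x y) {hyz : G.Adj y z}
    (hzx : z ≠ x) {w : G.Walk z a} (hw : (w.cons hyz).IsPath)
    (hlen : ((w.length + 2 : ℕ) : ℕ∞) < G.egirth) : ((w.cons hyz).cons hxy).IsPath := by
  rw [SimpleGraph.Walk.cons_isPath_iff]
  refine ⟨hw, fun hx => hzx ?_⟩
  have hxw : x ∈ w.support := by
    rw [SimpleGraph.Walk.support_cons, List.mem_cons] at hx
    exact hx.resolve_left hxy.ne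
  have hpath : ((w.takeUntil x hxw).cons hyz).IsPath := by
    rw [SimpleGraph.Walk.cons_isPath_iff] at hw ⊢
    exact ⟨hw.1.takeUntil hxw, fun h => hw.2 (w.support_takeUntil_subset_support hxw h)⟩
  have hback : ((SimpleGraph.Walk.nil : G.Walk x x).cons hxy.symm).IsPath :=
    SimpleGraph.Walk.IsPath.of_adj hxy.symm
  refine snd_unique_of_lt_egirth hpath hback (lt_of_le_of_lt (Nat.cast_le.2 ?_) hlen)
  simpa using w.length_takeUntil_le_length hxw

lemma exists_mem_ne_of_mem_edgeSet {e : Sym2 W} (he : e ∈ G.edgeSet) (y : W) :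
    ∃ a ∈ e, a ≠ y := by
  induction e with
  | h u v =>
    by_contra! h
    exact G.not_isDiag_of_mem_edgeSet he ((h u (by simp)).trans (h v (by simp)).symm)

end Girth

section Exploration

variable {W : Type} [Fintype W] {G : SimpleGraph W}

/-- The edges seen by the non-backtracking walks of length `k + 1` in `G` that start with
`x, y`. -/
def branchEdges (G : SimpleGraph W) : ℕ → W → W → Finset (Sym2 W)
  | 0, x, y => {s(x, y)}
  | k + 1, x, y =>
      insert s(x, y) (((G.neighborFinset y).erase x).biUnion fun z => branchEdges G k y z)

/-- There is a non-backtracking walk of length `k + 1` in `G` that starts with `x, y` and has all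
its edges in `s`. -/
def HasBranch (G : SimpleGraph W) (s : Finset (Sym2 W)) : ℕ → W → W → Prop
  | 0, x, y => s(x, y) ∈ s
  | k + 1, x, y => s(x, y) ∈ s ∧ ∃ z ∈ (G.neighborFinset y).erase x, HasBranch G s k y z

/-- The vertex `v` starts a branch of length `k + 1` in `s`. For small `k` this is the local
substitute for lying in a large component. -/
def HasLongBranch (G : SimpleGraph W) (s : Finset (Sym2 W)) (k : ℕ) (v : W) : Prop :=
  ∃ z ∈ G.neighborFinset v, HasBranch G s k v z

/-- The edges that are relevant for `HasLongBranch G · k v`. -/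
def vertexEdges (G : SimpleGraph W) (k : ℕ) (v : W) : Finset (Sym2 W) :=
  (G.neighborFinset v).biUnion fun z => branchEdges G k v z

lemma mem_branchEdges_self (G : SimpleGraph W) (k : ℕ) (x y : W) :
    s(x, y) ∈ branchEdges G k x y := by
  cases k <;> simp [branchEdges]

lemma HasBranch.edge_mem {s : Finset (Sym2 W)} {k : ℕ} {x y : W} (h : HasBranch G s k x y) :
    s(x, y) ∈ s := by
  cases k with
  | zero => exact h
  | succ k => exact h.1

lemma depOn_hasBranch (G : SimpleGraph W) (k : ℕ) (x y : W) :
    DepOn (branchEdges G k x y) fun s => HasBranch G s k x y := by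
  induction k generalizing x y with
  | zero => exact depOn_mem s(x, y)
  | succ k ih =>
    intro s s' h
    have hxy := h _ (mem_branchEdges_self G (k + 1) x y)
    have hnext : ∀ z ∈ (G.neighborFinset y).erase x, HasBranch G s k y z = HasBranch G s' k y z :=
      fun z hz => ih y z fun e he =>
        h e (Finset.mem_insert_of_mem (Finset.mem_biUnion.2 ⟨z, hz, he⟩))
    simp only [HasBranch, hxy, eq_iff_iff]
    exact and_congr_right fun _ => exists_congr fun z => and_congr_right fun hz =>
      (hnext z hz).to_iff

lemma depOn_hasLongBranch (G : SimpleGraph W) (k : ℕ) (v : W) :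
    DepOn (vertexEdges G k v) fun s => HasLongBranch G s k v :=
  fun _ _ hs => propext <| exists_congr fun z => and_congr_right fun hz =>
    (depOn_hasBranch G k v z fun e he => hs e (Finset.mem_biUnion.2 ⟨z, hz, he⟩)).to_iff

lemma branchEdges_subset_edgeSet {k : ℕ} {x y : W} (hxy : G.Adj x y) {e : Sym2 W}
    (he : e ∈ branchEdges G k x y) : e ∈ G.edgeSet := by
  induction k generalizing x y with
  | zero => rwa [Finset.mem_singleton.1 he]
  | succ k ih =>
    rcases Finset.mem_insert.1 he with rfl | h
    · exact hxy
    · obtain ⟨z, hz, hez⟩ := Finset.mem_biUnion.1 h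
      exact ih ((G.mem_neighborFinset y z).1 (Finset.mem_of_mem_erase hz)) hez

lemma exists_path_of_mem_branchEdges {k : ℕ} (hk : ((k + 2 : ℕ) : ℕ∞) < G.egirth) {x y : W}
    (hxy : G.Adj x y) {e : Sym2 W} (he : e ∈ branchEdges G k x y) {a : W} (ha : a ∈ e)
    (hax : a ≠ x) : ∃ w : G.Walk y a, (w.cons hxy).IsPath ∧ w.length ≤ k := by
  have hnil : ∀ {l : ℕ} {u v : W} (huv : G.Adj u v), a = v →
      ∃ w : G.Walk v a, (w.cons huv).IsPath ∧ w.length ≤ l := by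
    rintro l u v huv rfl
    exact ⟨.nil, .of_adj huv, Nat.zero_le _⟩
  induction k generalizing x y with
  | zero =>
    rw [Finset.mem_singleton.1 he, Sym2.mem_iff] at ha
    exact hnil hxy (ha.resolve_left hax)
  | succ k ih =>
    by_cases hay : a = y
    · exact hnil hxy hay
    rcases Finset.mem_insert.1 he with rfl | he
    · exact absurd ((Sym2.mem_iff.1 ha).resolve_left hax) hay
    obtain ⟨z, hz, hez⟩ := Finset.mem_biUnion.1 he
    rw [Finset.mem_erase, SimpleGraph.mem_neighborFinset] at hz
    have hk' : ((k + 2 : ℕ) : ℕ∞) < G.egirth := (Nat.cast_le.2 (by omega)).trans_lt hk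
    obtain ⟨w, hw, hlen⟩ := ih hk' hz.2 hez hay
    exact ⟨w.cons hz.2, isPath_cons_cons_of_lt_egirth hxy hz.1 hw
      ((Nat.cast_le.2 (by omega)).trans_lt hk), by simpa using hlen⟩

lemma disjoint_branchEdges {k : ℕ} (hk : ((2 * k + 2 : ℕ) : ℕ∞) < G.egirth) {y z z' : W}
    (hz : G.Adj y z) (hz' : G.Adj y z') (hne : z ≠ z') :
    Disjoint (branchEdges G k y z) (branchEdges G k y z') := by
  rw [Finset.disjoint_left]
  intro e he he'
  have hk' : ((k + 2 : ℕ) : ℕ∞) < G.egirth := (Nat.cast_le.2 (by omega)).trans_lt hk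
  obtain ⟨a, hae, hay⟩ := exists_mem_ne_of_mem_edgeSet (branchEdges_subset_edgeSet hz he) y
  obtain ⟨w, hw, hlen⟩ := exists_path_of_mem_branchEdges hk' hz he hae hay
  obtain ⟨w', hw', hlen'⟩ := exists_path_of_mem_branchEdges hk' hz' he' hae hay
  exact hne (snd_unique_of_lt_egirth hw hw' ((Nat.cast_le.2 (by omega)).trans_lt hk))

lemma pairwiseDisjoint_branchEdges {k : ℕ} (hk : ((2 * k + 2 : ℕ) : ℕ∞) < G.egirth) {y : W}
    {S : Finset W} (hS : S ⊆ G.neighborFinset y) :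
    (S : Set W).PairwiseDisjoint (branchEdges G k y) :=
  fun _ hz _ hz' hne => disjoint_branchEdges hk ((G.mem_neighborFinset _ _).1 (hS hz))
    ((G.mem_neighborFinset _ _).1 (hS hz')) hne

lemma notMem_branchEdges {k : ℕ} (hk : ((k + 2 : ℕ) : ℕ∞) < G.egirth) {x y z : W}
    (hxy : G.Adj x y) (hyz : G.Adj y z) (hne : z ≠ x) : s(x, y) ∉ branchEdges G k y z := by
  intro he
  obtain ⟨w, hw, hlen⟩ := exists_path_of_mem_branchEdges hk hyz he (Sym2.mem_mk_left x y) hxy.ne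
  refine hne (snd_unique_of_lt_egirth hw
    (SimpleGraph.Walk.IsPath.of_adj hxy.symm : (SimpleGraph.Walk.nil.cons hxy.symm).IsPath)
    (lt_of_le_of_lt (Nat.cast_le.2 ?_) hk))
  simpa using hlen

end Exploration

section BranchProbability

/-- The probability that there is no open path of length `k + 1` from the root of a tree through
a given child, when every child has `m` children of its own and edges are open independently with
probability `p`. -/
def extinctProb (p : ℝ) (m : ℕ) : ℕ → ℝ
  | 0 => 1 - p
  | k + 1 => 1 - p + p * extinctProb p m k ^ m

variable {W : Type} [Fintype W] {G : SimpleGraph W} {d k : ℕ}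

lemma mem_edgeFinset' {e : Sym2 W} : e ∈ edgeFinset' G ↔ e ∈ G.edgeSet := by
  simp [edgeFinset']

lemma bernProb_open (p : ℝ) {x y : W} (hxy : G.Adj x y) :
    bernProb p (edgeFinset' G) (fun s => s(x, y) ∈ s) = p :=
  bernProb_mem p (mem_edgeFinset'.2 hxy)

lemma bernProb_not_hasBranch (hG : G.IsRegularOfDegree d)
    (hk : ((2 * k + 2 : ℕ) : ℕ∞) < G.egirth) (p : ℝ) {x y : W} (hxy : G.Adj x y) :
    bernProb p (edgeFinset' G) (fun s => ¬ HasBranch G s k x y) = extinctProb p (d - 1) k := by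
  induction k generalizing x y with
  | zero => simp only [HasBranch, bernProb_not, bernProb_open p hxy, extinctProb]
  | succ k ih =>
    have hk' : ((2 * k + 2 : ℕ) : ℕ∞) < G.egirth := (Nat.cast_le.2 (by omega)).trans_lt hk
    set S := (G.neighborFinset y).erase x with hS
    have hSadj : ∀ z ∈ S, G.Adj y z ∧ z ≠ x := fun z hz => by
      rw [hS, Finset.mem_erase, SimpleGraph.mem_neighborFinset] at hz
      exact hz.symm
    have hScard : S.card = d - 1 := by
      rw [hS, Finset.card_erase_of_mem ((G.mem_neighborFinset y x).2 hxy.symm),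
        G.card_neighborFinset_eq_degree, hG.degree_eq]
    have hdep : ∀ z ∈ S, DepOn (branchEdges G k y z) fun s => ¬ HasBranch G s k y z :=
      fun z _ => (depOn_hasBranch G k y z).comp Not
    have hdead : bernProb p (edgeFinset' G) (fun s => ∀ z ∈ S, ¬ HasBranch G s k y z) =
        extinctProb p (d - 1) k ^ (d - 1) := by
      rw [bernProb_forall_of_depOn hdep
        (pairwiseDisjoint_branchEdges hk' (Finset.erase_subset _ _)),
        Finset.prod_congr rfl fun z hz => ih hk' (hSadj z hz).1, Finset.prod_const, hScard]
    have hdisj : Disjoint {s(x, y)} (S.biUnion (branchEdges G k y)) := by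
      simp only [Finset.disjoint_singleton_left, Finset.mem_biUnion, not_exists, not_and]
      exact fun z hz => notMem_branchEdges ((Nat.cast_le.2 (by omega)).trans_lt hk) hxy
        (hSadj z hz).1 (hSadj z hz).2
    have hsplit : ∀ s, HasBranch G s (k + 1) x y ↔
        s(x, y) ∈ s ∧ ¬ ∀ z ∈ S, ¬ HasBranch G s k y z := fun s => by
      simp only [HasBranch, hS, not_forall, not_not, exists_prop]
    simp only [hsplit]
    rw [bernProb_not, bernProb_and_of_depOn (depOn_mem _) ((DepOn.forall_mem hdep).comp Not) hdisj,
      bernProb_not, hdead, bernProb_open p hxy, extinctProb]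
    ring

lemma bernProb_hasLongBranch (hG : G.IsRegularOfDegree d)
    (hk : ((2 * k + 2 : ℕ) : ℕ∞) < G.egirth) (p : ℝ) (v : W) :
    bernProb p (edgeFinset' G) (fun s => HasLongBranch G s k v) =
      1 - extinctProb p (d - 1) k ^ d := by
  have hdead : bernProb p (edgeFinset' G) (fun s => ∀ z ∈ G.neighborFinset v,
      ¬ HasBranch G s k v z) = extinctProb p (d - 1) k ^ d := by
    rw [bernProb_forall_of_depOn (fun z _ => (depOn_hasBranch G k v z).comp Not)
      (pairwiseDisjoint_branchEdges hk subset_rfl), Finset.prod_congr rfl fun z hz =>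
        bernProb_not_hasBranch hG hk p ((G.mem_neighborFinset v z).1 hz), Finset.prod_const,
      G.card_neighborFinset_eq_degree, hG.degree_eq]
  rw [← hdead, ← bernProb_not]
  simp only [HasLongBranch, not_forall, not_not, exists_prop]

lemma bernProb_open_and_not_hasBranch (hG : G.IsRegularOfDegree d)
    (hk : ((2 * k + 2 : ℕ) : ℕ∞) < G.egirth) (p : ℝ) {v z : W} (hvz : G.Adj v z) :
    bernProb p (edgeFinset' G) (fun s => s(v, z) ∈ s ∧ ¬ HasBranch G s k v z) =
      extinctProb p (d - 1) k - (1 - p) := by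
  have hbranch := bernProb_not_hasBranch hG hk p hvz
  rw [bernProb_not] at hbranch
  have hopen : ∀ s, s(v, z) ∈ s ∧ HasBranch G s k v z ↔ HasBranch G s k v z :=
    fun s => and_iff_right_of_imp HasBranch.edge_mem
  rw [bernProb_and_not, bernProb_open p hvz]
  simp only [hopen]
  linarith

lemma bernProb_open_and_hasLongBranch (hG : G.IsRegularOfDegree d)
    (hk : ((2 * k + 2 : ℕ) : ℕ∞) < G.egirth) (p : ℝ) {v z : W} (hvz : G.Adj v z) :
    bernProb p (edgeFinset' G) (fun s => s(v, z) ∈ s ∧ HasLongBranch G s k v) =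
      p - (extinctProb p (d - 1) k - (1 - p)) * extinctProb p (d - 1) k ^ (d - 1) := by
  set S := (G.neighborFinset v).erase z with hS
  have hzv : z ∈ G.neighborFinset v := (G.mem_neighborFinset v z).2 hvz
  have hSadj : ∀ z' ∈ S, G.Adj v z' := fun z' hz' =>
    (G.mem_neighborFinset v z').1 (Finset.mem_of_mem_erase hz')
  have hScard : S.card = d - 1 := by
    rw [hS, Finset.card_erase_of_mem hzv, G.card_neighborFinset_eq_degree, hG.degree_eq]
  have hdep : ∀ z' ∈ S, DepOn (branchEdges G k v z') fun s => ¬ HasBranch G s k v z' :=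
    fun z' _ => (depOn_hasBranch G k v z').comp Not
  have hdead : bernProb p (edgeFinset' G) (fun s => ∀ z' ∈ S, ¬ HasBranch G s k v z') =
      extinctProb p (d - 1) k ^ (d - 1) := by
    rw [bernProb_forall_of_depOn hdep
      (pairwiseDisjoint_branchEdges hk (Finset.erase_subset _ _)), Finset.prod_congr rfl
        fun z' hz' => bernProb_not_hasBranch hG hk p (hSadj z' hz'), Finset.prod_const, hScard]
  have hdisj : Disjoint (branchEdges G k v z) (S.biUnion (branchEdges G k v)) :=
    (Finset.disjoint_biUnion_right _ _ _).2 fun z' hz' =>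
      disjoint_branchEdges hk hvz (hSadj z' hz') (Finset.ne_of_mem_erase hz').symm
  have hdepz : DepOn (branchEdges G k v z) fun s => s(v, z) ∈ s ∧ ¬ HasBranch G s k v z :=
    fun s s' hs => propext <| and_congr (hs _ (mem_branchEdges_self G k v z))
      (not_congr (depOn_hasBranch G k v z hs).to_iff)
  have hsplit : ∀ s, s(v, z) ∈ s ∧ HasLongBranch G s k v ↔ s(v, z) ∈ s ∧
      ¬ ((s(v, z) ∈ s ∧ ¬ HasBranch G s k v z) ∧ ∀ z' ∈ S, ¬ HasBranch G s k v z') := fun s => by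
    refine and_congr_right fun hs => ?_
    rw [HasLongBranch, ← Finset.insert_erase hzv, Finset.exists_mem_insert, ← hS]
    simp only [hs, true_and, not_and_or, not_not, not_forall, exists_prop]
  simp only [hsplit]
  rw [bernProb_and_not, bernProb_open p hvz]
  simp only [← and_assoc, and_self]
  rw [bernProb_and_of_depOn hdepz (DepOn.forall_mem hdep) hdisj,
    bernProb_open_and_not_hasBranch hG hk p hvz, hdead]

end BranchProbability

section OpenGraph

variable {W : Type} {G : SimpleGraph W} {s t : Finset (Sym2 W)}

/-- The graph whose edges are the elements of `s` off the diagonal: the outcome of a percolation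
in which `s` is the set of retained edges. -/
def openGraph (s : Finset (Sym2 W)) : SimpleGraph W := .fromEdgeSet s

lemma openGraph_adj {x y : W} : (openGraph s).Adj x y ↔ s(x, y) ∈ s ∧ x ≠ y :=
  SimpleGraph.fromEdgeSet_adj _

lemma openGraph_mono (h : s ⊆ t) : openGraph s ≤ openGraph t :=
  SimpleGraph.fromEdgeSet_mono (Finset.coe_subset.2 h)

variable [Fintype W]

lemma percProb_eq_bernProb (G : SimpleGraph W) (p : ℝ) (P : SimpleGraph W → Prop) :
    percProb G p P = bernProb p (edgeFinset' G) fun s => P (openGraph s) := rfl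

lemma openGraph_adj_iff (hs : s ⊆ edgeFinset' G) {x y : W} :
    (openGraph s).Adj x y ↔ s(x, y) ∈ s :=
  openGraph_adj.trans <| and_iff_left_of_imp fun h => G.ne_of_adj (mem_edgeFinset'.1 (hs h))

lemma openGraph_le (hs : s ⊆ edgeFinset' G) : openGraph s ≤ G :=
  fun _ _ h => mem_edgeFinset'.1 (hs (openGraph_adj.1 h).1)

lemma edgeFinset'_openGraph (hs : s ⊆ edgeFinset' G) : edgeFinset' (openGraph s) = s := by
  ext e
  induction e with
  | h x y => rw [mem_edgeFinset', SimpleGraph.mem_edgeSet, openGraph_adj_iff hs]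

lemma sum_degree_eq_two_mul_card_edgeFinset' (G : SimpleGraph W) :
    ∑ v, G.degree v = 2 * (edgeFinset' G).card := by
  rw [G.sum_degrees_eq_twice_card_edges]
  congr 2
  ext e
  rw [SimpleGraph.mem_edgeFinset, mem_edgeFinset']

lemma card_edgeFinset'_le {d : ℕ} (hd : ∀ v, G.degree v ≤ d) :
    (edgeFinset' G).card ≤ d * Fintype.card W := by
  have hsum : ∑ v, G.degree v ≤ Fintype.card W * d := Finset.sum_le_card_nsmul _ _ d fun v _ => hd v
  rw [sum_degree_eq_two_mul_card_edgeFinset'] at hsum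
  linarith

lemma mem_compVerts {c : G.ConnectedComponent} {v : W} :
    v ∈ compVerts G c ↔ G.connectedComponentMk v = c := by
  simp [compVerts]

lemma two_mul_card_compEdges (G : SimpleGraph W) (c : G.ConnectedComponent) :
    2 * (compEdges G c).card = ∑ v ∈ compVerts G c, G.degree v := by
  have hsub : compEdges G c ⊆ edgeFinset' G := Finset.filter_subset _ _
  have hadj : ∀ x y, (openGraph (compEdges G c)).Adj x y ↔ x ∈ compVerts G c ∧ G.Adj x y := by
    intro x y
    rw [openGraph_adj_iff hsub, compEdges, Finset.mem_filter, mem_edgeFinset',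
      SimpleGraph.mem_edgeSet, mem_compVerts, Sym2.ball, and_comm]
    exact and_congr_left fun h => and_iff_left_of_imp fun hx =>
      (SimpleGraph.ConnectedComponent.sound h.symm.reachable).trans hx
  have hdeg : ∀ v, (openGraph (compEdges G c)).degree v =
      if v ∈ compVerts G c then G.degree v else 0 := fun v => by
    rw [← SimpleGraph.card_neighborFinset_eq_degree, ← SimpleGraph.card_neighborFinset_eq_degree]
    split_ifs with hv
    · congr 1; ext y; simp [hadj, hv]
    · rw [Finset.card_eq_zero]; ext y; simp [hadj, hv]
  rw [← edgeFinset'_openGraph hsub, ← sum_degree_eq_two_mul_card_edgeFinset',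
    Finset.sum_congr rfl fun v _ => hdeg v, Finset.sum_ite_mem, Finset.univ_inter]

end OpenGraph

section Thickening

variable {W : Type} [Fintype W] {G : SimpleGraph W}

/-- The vertices at distance at most `k` from `A` in `G`. -/
def thickening (G : SimpleGraph W) (A : Finset W) (k : ℕ) : Finset W :=
  {v | ∃ a ∈ A, ∃ w : G.Walk a v, w.length ≤ k}

lemma mem_thickening {A : Finset W} {k : ℕ} {v : W} :
    v ∈ thickening G A k ↔ ∃ a ∈ A, ∃ w : G.Walk a v, w.length ≤ k := by
  simp [thickening]

lemma subset_thickening (G : SimpleGraph W) (A : Finset W) (k : ℕ) : A ⊆ thickening G A k :=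
  fun a ha => mem_thickening.2 ⟨a, ha, .nil, Nat.zero_le k⟩

lemma thickening_subset_succ (G : SimpleGraph W) (A : Finset W) (k : ℕ) :
    thickening G A k ⊆ thickening G A (k + 1) := fun v hv => by
  obtain ⟨a, ha, w, hw⟩ := mem_thickening.1 hv
  exact mem_thickening.2 ⟨a, ha, w, hw.trans k.le_succ⟩

lemma mem_thickening_succ {A : Finset W} {k : ℕ} {x y : W} (hx : x ∈ thickening G A k)
    (hxy : G.Adj x y) : y ∈ thickening G A (k + 1) := by
  obtain ⟨a, ha, w, hw⟩ := mem_thickening.1 hx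
  exact mem_thickening.2 ⟨a, ha, w.concat hxy, by simpa using hw⟩

lemma card_thickening_le {d : ℕ} (hd : ∀ v, G.degree v ≤ d) (A : Finset W) (k : ℕ) :
    (thickening G A k).card ≤ A.card * (d + 1) ^ k := by
  induction k generalizing A with
  | zero =>
    have hsub : thickening G A 0 ⊆ A := fun v hv => by
      obtain ⟨a, ha, w, hw⟩ := mem_thickening.1 hv
      rwa [← w.eq_of_length_eq_zero (Nat.le_zero.1 hw)]
    simpa using Finset.card_le_card hsub
  | succ k ih =>
    have hsub : thickening G A (k + 1) ⊆
        thickening G (A.biUnion fun a => insert a (G.neighborFinset a)) k := by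
      intro v hv
      obtain ⟨a, ha, w, hw⟩ := mem_thickening.1 hv
      cases w with
      | nil =>
        exact subset_thickening _ _ _
          (Finset.mem_biUnion.2 ⟨v, ha, Finset.mem_insert_self _ _⟩)
      | cons h w =>
        exact mem_thickening.2 ⟨_, Finset.mem_biUnion.2 ⟨a, ha, Finset.mem_insert_of_mem
          ((G.mem_neighborFinset _ _).2 h)⟩, w, by simpa using hw⟩
    calc (thickening G A (k + 1)).card
        ≤ (A.biUnion fun a => insert a (G.neighborFinset a)).card * (d + 1) ^ k :=
          (Finset.card_le_card hsub).trans (ih _)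
      _ ≤ A.card * (d + 1) * (d + 1) ^ k := by
          gcongr
          exact Finset.card_biUnion_le_card_mul _ _ _ fun a _ =>
            (Finset.card_insert_le _ _).trans (Nat.succ_le_succ (hd a))
      _ = A.card * (d + 1) ^ (k + 1) := by ring

end Thickening

section LongBranch

variable {W : Type} [Fintype W] {G : SimpleGraph W} {d k : ℕ} {s : Finset (Sym2 W)}

lemma HasBranch.exists_path (hs : s ⊆ edgeFinset' G) (hk : ((k + 2 : ℕ) : ℕ∞) < G.egirth)
    {x y : W} (h : HasBranch G s k x y) : ∃ (hxy : (openGraph s).Adj x y) (u : W)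
      (w : (openGraph s).Walk y u), (w.cons hxy).IsPath ∧ w.length = k := by
  refine ⟨(openGraph_adj_iff hs).2 h.edge_mem, ?_⟩
  induction k generalizing x y with
  | zero => exact ⟨y, .nil, .of_adj _, rfl⟩
  | succ k ih =>
    obtain ⟨hxy, z, hz, hyz⟩ := h
    have hk' : ((k + 2 : ℕ) : ℕ∞) < G.egirth := (Nat.cast_le.2 (by omega)).trans_lt hk
    obtain ⟨u, w, hw, hlen⟩ := ih hk' hyz
    refine ⟨u, w.cons ((openGraph_adj_iff hs).2 hyz.edge_mem), ?_, by simpa using hlen⟩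
    refine isPath_cons_cons_of_lt_egirth _ (Finset.ne_of_mem_erase hz) hw ?_
    rw [hlen]
    exact hk'.trans_le (SimpleGraph.egirth_anti (openGraph_le hs))

lemma hasBranch_of_isPath (hs : s ⊆ edgeFinset' G) {x y u : W} (hxy : (openGraph s).Adj x y)
    (w : (openGraph s).Walk y u) (hw : (w.cons hxy).IsPath) (hk : k ≤ w.length) :
    HasBranch G s k x y := by
  induction k generalizing x y with
  | zero => exact (openGraph_adj.1 hxy).1
  | succ k ih =>
    refine ⟨(openGraph_adj.1 hxy).1, ?_⟩
    cases w with
    | nil => exact absurd hk (Nat.not_succ_le_zero k)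
    | @cons _ z _ hyz w =>
      rw [SimpleGraph.Walk.cons_isPath_iff] at hw
      refine ⟨z, Finset.mem_erase.2 ⟨?_, (G.mem_neighborFinset y z).2 (openGraph_le hs hyz)⟩,
        ih hyz w hw.1 (Nat.succ_le_succ_iff.1 hk)⟩
      rintro rfl
      exact hw.2 (List.mem_cons_of_mem _ w.start_mem_support)

lemma HasLongBranch.le_card_compVerts (hs : s ⊆ edgeFinset' G)
    (hk : ((k + 2 : ℕ) : ℕ∞) < G.egirth) {v : W} (h : HasLongBranch G s k v) :
    k + 2 ≤ (compVerts (openGraph s) ((openGraph s).connectedComponentMk v)).card := by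
  obtain ⟨z, -, hbranch⟩ := h
  obtain ⟨hvz, u, w, hw, hlen⟩ := hbranch.exists_path hs hk
  calc k + 2 = (w.cons hvz).support.toFinset.card := by
        rw [List.toFinset_card_of_nodup hw.support_nodup, SimpleGraph.Walk.length_support,
          SimpleGraph.Walk.length_cons, hlen]
    _ ≤ _ := Finset.card_le_card fun x hx => mem_compVerts.2 <|
        SimpleGraph.ConnectedComponent.sound
          ((w.cons hvz).takeUntil x (List.mem_toFinset.1 hx)).reachable.symm

lemma hasLongBranch_of_lt_card_compVerts (hd : ∀ v, G.degree v ≤ d) (hs : s ⊆ edgeFinset' G)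
    {v : W} (h : (d + 1) ^ k <
      (compVerts (openGraph s) ((openGraph s).connectedComponentMk v)).card) :
    HasLongBranch G s k v := by
  have hball := card_thickening_le hd {v} k
  rw [Finset.card_singleton, one_mul] at hball
  obtain ⟨u, hu, hfar⟩ := Finset.exists_mem_notMem_of_card_lt_card (hball.trans_lt h)
  obtain ⟨w⟩ := SimpleGraph.ConnectedComponent.exact (mem_compVerts.1 hu).symm
  obtain ⟨path, hpath⟩ := w.toPath
  have hlen : ¬ path.length ≤ k := fun hlen => hfar <|
    mem_thickening.2 ⟨v, Finset.mem_singleton_self v, path.mapLe (openGraph_le hs),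
      by simpa using hlen⟩
  cases path with
  | nil => exact absurd k.zero_le hlen
  | @cons _ z _ hvz tail =>
    rw [SimpleGraph.Walk.length_cons] at hlen
    exact ⟨z, (G.mem_neighborFinset v z).2 (openGraph_le hs hvz),
      hasBranch_of_isPath hs hvz tail hpath (by omega)⟩

/-- The vertices that start a branch of length `k + 1` in `s`. -/
def longVerts (G : SimpleGraph W) (k : ℕ) (s : Finset (Sym2 W)) : Finset W :=
  {v | HasLongBranch G s k v}

/-- The degree of `v` in the graph of the edges of `G` that belong to `s`. -/
def openDegree (G : SimpleGraph W) (s : Finset (Sym2 W)) (v : W) : ℕ :=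
  ((G.neighborFinset v).filter fun z => s(v, z) ∈ s).card

/-- The sum of the open degrees of the vertices that start a branch of length `k + 1` in `s`. -/
def longDegree (G : SimpleGraph W) (k : ℕ) (s : Finset (Sym2 W)) : ℕ :=
  ∑ v ∈ longVerts G k s, openDegree G s v

lemma openDegree_le (hd : ∀ v, G.degree v ≤ d) (s : Finset (Sym2 W)) (v : W) :
    openDegree G s v ≤ d :=
  (Finset.card_filter_le _ _).trans (hd v)

lemma degree_openGraph (hs : s ⊆ edgeFinset' G) (v : W) :
    (openGraph s).degree v = openDegree G s v := by
  rw [← SimpleGraph.card_neighborFinset_eq_degree, openDegree]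
  congr 1
  ext z
  rw [SimpleGraph.mem_neighborFinset, Finset.mem_filter, SimpleGraph.mem_neighborFinset,
    openGraph_adj_iff hs]
  exact (and_iff_right_of_imp fun h => mem_edgeFinset'.1 (hs h)).symm

lemma compVerts_subset_longVerts (hd : ∀ v, G.degree v ≤ d) (hs : s ⊆ edgeFinset' G)
    {c : (openGraph s).ConnectedComponent} (hc : (d + 1) ^ k < (compVerts (openGraph s) c).card) :
    compVerts (openGraph s) c ⊆ longVerts G k s := fun v hv => by
  rw [mem_compVerts] at hv
  subst hv
  exact Finset.mem_filter.2 ⟨Finset.mem_univ v, hasLongBranch_of_lt_card_compVerts hd hs hc⟩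

lemma two_mul_card_compEdges_le_longDegree (hs : s ⊆ edgeFinset' G)
    {c : (openGraph s).ConnectedComponent} (hc : compVerts (openGraph s) c ⊆ longVerts G k s) :
    2 * (compEdges (openGraph s) c).card ≤ longDegree G k s := by
  rw [two_mul_card_compEdges, Finset.sum_congr rfl fun v _ => degree_openGraph hs v]
  exact Finset.sum_le_sum_of_subset hc

lemma longDegree_le (hd : ∀ v, G.degree v ≤ d) (hs : s ⊆ edgeFinset' G)
    {c : (openGraph s).ConnectedComponent} (hc : compVerts (openGraph s) c ⊆ longVerts G k s) :
    longDegree G k s ≤ 2 * (compEdges (openGraph s) c).card +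
      d * ((longVerts G k s).card - (compVerts (openGraph s) c).card) := by
  rw [two_mul_card_compEdges, Finset.sum_congr rfl fun v _ => degree_openGraph hs v, longDegree,
    ← Finset.sum_sdiff hc, add_comm, ← Finset.card_sdiff_of_subset hc, mul_comm]
  exact Nat.add_le_add_left (Finset.sum_le_card_nsmul _ _ d fun v _ => openDegree_le hd s v) _

end LongBranch

section Concentration

variable {W : Type} [Fintype W] {G : SimpleGraph W} {d k : ℕ} {p : ℝ}

lemma card_filter_mem_vertexEdges_le (hd : ∀ v, G.degree v ≤ d)
    (hk : ((k + 2 : ℕ) : ℕ∞) < G.egirth) (e : Sym2 W) :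
    (Finset.univ.filter fun v => e ∈ vertexEdges G k v).card ≤ 2 * (d + 1) ^ (k + 1) := by
  induction e with
  | h a b =>
    have hsub : (Finset.univ.filter fun v => s(a, b) ∈ vertexEdges G k v) ⊆
        thickening G {a, b} (k + 1) := fun v hv => by
      obtain ⟨z, hz, he⟩ := Finset.mem_biUnion.1 (Finset.mem_filter.1 hv).2
      rw [SimpleGraph.mem_neighborFinset] at hz
      obtain ⟨u, hu, huv⟩ := exists_mem_ne_of_mem_edgeSet (branchEdges_subset_edgeSet hz he) v
      obtain ⟨w, -, hlen⟩ := exists_path_of_mem_branchEdges hk hz he hu huv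
      exact mem_thickening.2 ⟨u, by simpa using hu, (w.cons hz).reverse, by simpa using hlen⟩
    calc (Finset.univ.filter fun v => s(a, b) ∈ vertexEdges G k v).card
        ≤ ({a, b} : Finset W).card * (d + 1) ^ (k + 1) :=
          (Finset.card_le_card hsub).trans (card_thickening_le hd _ _)
      _ ≤ 2 * (d + 1) ^ (k + 1) := Nat.mul_le_mul_right _ Finset.card_le_two

lemma abs_sum_insert_sub_le (hd : ∀ v, G.degree v ≤ d) (hk : ((k + 2 : ℕ) : ℕ∞) < G.egirth)
    {D : ℝ} (hD : 0 ≤ D) {φ : W → Finset (Sym2 W) → ℝ} (hdep : ∀ v, DepOn (vertexEdges G k v) (φ v))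
    (hφ : ∀ v s, φ v s ∈ Set.Icc 0 D) (e : Sym2 W) (s : Finset (Sym2 W)) :
    |∑ v, φ v (insert e s) - ∑ v, φ v s| ≤ 2 * (d + 1) ^ (k + 1) * D := by
  have hterm : ∀ v, |φ v (insert e s) - φ v s| ≤ if e ∈ vertexEdges G k v then D else 0 := by
    intro v
    split_ifs with he
    · have hdist := Real.dist_le_of_mem_Icc (hφ v (insert e s)) (hφ v s)
      rwa [Real.dist_eq, sub_zero] at hdist
    · rw [hdep v (s' := s), sub_self, abs_zero]
      exact fun e' he' => Finset.mem_insert.trans <|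
        or_iff_right fun h : e' = e => he (h ▸ he')
  rw [← Finset.sum_sub_distrib]
  calc |∑ v, (φ v (insert e s) - φ v s)|
      ≤ ∑ v, if e ∈ vertexEdges G k v then D else 0 :=
        (Finset.abs_sum_le_sum_abs _ _).trans (Finset.sum_le_sum fun v _ => hterm v)
    _ = (Finset.univ.filter fun v => e ∈ vertexEdges G k v).card * D := by
        rw [← Finset.sum_filter, Finset.sum_const, nsmul_eq_mul]
    _ ≤ 2 * (d + 1) ^ (k + 1) * D := by
        gcongr
        exact_mod_cast card_filter_mem_vertexEdges_le hd hk e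

lemma depOn_openDegree (G : SimpleGraph W) (k : ℕ) (v : W) :
    DepOn (vertexEdges G k v) fun s => openDegree G s v := fun _ _ hs =>
  congrArg Finset.card <| Finset.filter_congr fun z hz =>
    hs _ (Finset.mem_biUnion.2 ⟨z, hz, mem_branchEdges_self G k v z⟩)

lemma card_longVerts_eq_sum (G : SimpleGraph W) (k : ℕ) (s : Finset (Sym2 W)) :
    ((longVerts G k s).card : ℝ) = ∑ v, if HasLongBranch G s k v then 1 else 0 := by
  rw [longVerts, Finset.sum_boole]

lemma longDegree_eq_sum (G : SimpleGraph W) (k : ℕ) (s : Finset (Sym2 W)) :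
    (longDegree G k s : ℝ) = ∑ v, if HasLongBranch G s k v then (openDegree G s v : ℝ) else 0 := by
  rw [longDegree, longVerts, Nat.cast_sum, Finset.sum_filter]

lemma bernExp_card_longVerts (hG : G.IsRegularOfDegree d)
    (hk : ((2 * k + 2 : ℕ) : ℕ∞) < G.egirth) (p : ℝ) :
    bernExp p (edgeFinset' G) (fun s => ((longVerts G k s).card : ℝ)) =
      (1 - extinctProb p (d - 1) k ^ d) * Fintype.card W := by
  simp only [card_longVerts_eq_sum, bernExp_sum, ← bernProb.eq_def, bernProb_hasLongBranch hG hk]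
  rw [Finset.sum_const, nsmul_eq_mul, Finset.card_univ, mul_comm]

lemma bernExp_longDegree (hG : G.IsRegularOfDegree d)
    (hk : ((2 * k + 2 : ℕ) : ℕ∞) < G.egirth) (p : ℝ) :
    bernExp p (edgeFinset' G) (fun s => (longDegree G k s : ℝ)) =
      d * (p - (extinctProb p (d - 1) k - (1 - p)) * extinctProb p (d - 1) k ^ (d - 1)) *
        Fintype.card W := by
  have hterm : ∀ v s, (if HasLongBranch G s k v then (openDegree G s v : ℝ) else 0) =
      ∑ z ∈ G.neighborFinset v, if s(v, z) ∈ s ∧ HasLongBranch G s k v then 1 else 0 := by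
    intro v s
    split_ifs with hv
    · simp only [hv, and_true, Finset.sum_boole, openDegree]
    · simp only [hv, and_false, if_false, Finset.sum_const_zero]
  have hvertex : ∀ v, ∑ z ∈ G.neighborFinset v, bernProb p (edgeFinset' G)
      (fun s => s(v, z) ∈ s ∧ HasLongBranch G s k v) =
        d * (p - (extinctProb p (d - 1) k - (1 - p)) * extinctProb p (d - 1) k ^ (d - 1)) := by
    intro v
    rw [Finset.sum_congr rfl fun z hz =>
      bernProb_open_and_hasLongBranch hG hk p ((G.mem_neighborFinset v z).1 hz), Finset.sum_const,
      nsmul_eq_mul, G.card_neighborFinset_eq_degree, hG.degree_eq]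
  calc bernExp p (edgeFinset' G) (fun s => (longDegree G k s : ℝ))
      = ∑ v, ∑ z ∈ G.neighborFinset v, bernProb p (edgeFinset' G)
          (fun s => s(v, z) ∈ s ∧ HasLongBranch G s k v) := by
        simp only [longDegree_eq_sum, hterm, bernExp_sum, bernProb]
        congr!
    _ = _ := by
        rw [Finset.sum_congr rfl fun v _ => hvertex v, Finset.sum_const, nsmul_eq_mul,
          Finset.card_univ, mul_comm]

lemma exists_bernProb_abs_card_longVerts_sub_le (hd : 0 < d) (k : ℕ) {r : ℝ} (hr : 0 < r) :
    ∃ ρ > 0, ∀ {p : ℝ}, p ∈ Set.Icc (0 : ℝ) 1 → ∀ {W : Type} [Fintype W] {G : SimpleGraph W},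
      G.IsRegularOfDegree d → ((2 * k + 2 : ℕ) : ℕ∞) < G.egirth →
      bernProb p (edgeFinset' G) (fun s => r * Fintype.card W ≤
        |((longVerts G k s).card : ℝ) - (1 - extinctProb p (d - 1) k ^ d) * Fintype.card W|) ≤
        2 * Real.exp (-ρ * Fintype.card W) := by
  obtain ⟨ρ, hρ, hconc⟩ := exists_bernProb_abs_sub_bernExp_le
    (c := 2 * (d + 1) ^ (k + 1) * 1) (M := d) (r := r) (by positivity) (by positivity) hr
  refine ⟨ρ, hρ, fun {p} hp W _ G hG hk => ?_⟩
  have hdeg : ∀ v, G.degree v ≤ d := fun v => (hG.degree_eq v).le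
  have hk' : ((k + 2 : ℕ) : ℕ∞) < G.egirth := (Nat.cast_le.2 (by omega)).trans_lt hk
  rw [← bernExp_card_longVerts hG hk p]
  refine hconc hp (mod_cast card_edgeFinset'_le hdeg) fun e s => ?_
  simp only [card_longVerts_eq_sum]
  refine abs_sum_insert_sub_le hdeg hk' zero_le_one
    (fun v => (depOn_hasLongBranch G k v).comp fun P => if P then (1 : ℝ) else 0)
    (fun v s => ?_) e s
  split_ifs <;> simp

lemma exists_bernProb_abs_longDegree_sub_le (hd : 0 < d) (k : ℕ) {r : ℝ} (hr : 0 < r) :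
    ∃ ρ > 0, ∀ {p : ℝ}, p ∈ Set.Icc (0 : ℝ) 1 → ∀ {W : Type} [Fintype W] {G : SimpleGraph W},
      G.IsRegularOfDegree d → ((2 * k + 2 : ℕ) : ℕ∞) < G.egirth →
      bernProb p (edgeFinset' G) (fun s => r * Fintype.card W ≤ |(longDegree G k s : ℝ) -
        d * (p - (extinctProb p (d - 1) k - (1 - p)) * extinctProb p (d - 1) k ^ (d - 1)) *
          Fintype.card W|) ≤
        2 * Real.exp (-ρ * Fintype.card W) := by
  obtain ⟨ρ, hρ, hconc⟩ := exists_bernProb_abs_sub_bernExp_le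
    (c := 2 * (d + 1) ^ (k + 1) * d) (M := d) (r := r) (by positivity) (by positivity) hr
  refine ⟨ρ, hρ, fun {p} hp W _ G hG hk => ?_⟩
  have hdeg : ∀ v, G.degree v ≤ d := fun v => (hG.degree_eq v).le
  have hk' : ((k + 2 : ℕ) : ℕ∞) < G.egirth := (Nat.cast_le.2 (by omega)).trans_lt hk
  rw [← bernExp_longDegree hG hk p]
  refine hconc hp (mod_cast card_edgeFinset'_le hdeg) fun e s => ?_
  simp only [longDegree_eq_sum]
  refine abs_sum_insert_sub_le hdeg hk' d.cast_nonneg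
    (fun v => (depOn_hasLongBranch G k v).map₂ (depOn_openDegree G k v)
      fun P (m : ℕ) => if P then (m : ℝ) else 0) (fun v s => ?_) e s
  split_ifs
  · exact ⟨Nat.cast_nonneg _, Nat.cast_le.2 (openDegree_le hdeg s v)⟩
  · exact ⟨le_rfl, d.cast_nonneg⟩

end Concentration

section Expansion

variable {W : Type} [Fintype W] {G : SimpleGraph W} {b r : ℝ} {d K : ℕ} {A B : Finset W}

lemma IsExpander.degree_le (hG : IsExpander G b d) (v : W) : G.degree v ≤ d := by
  rw [← G.card_neighborFinset_eq_degree, ← Set.ncard_coe_finset, G.coe_neighborFinset]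
  exact hG.1 v

lemma cutCard_thickening_add_le (hd : ∀ v, G.degree v ≤ d) (F : Finset (Sym2 W)) (A : Finset W)
    (k : ℕ) : cutCard G (thickening (G.deleteEdges F) A k) +
        d * (thickening (G.deleteEdges F) A k).card ≤
      F.card + d * (thickening (G.deleteEdges F) A (k + 1)).card := by
  set S := thickening (G.deleteEdges F) A k
  set S' := thickening (G.deleteEdges F) A (k + 1)
  have hsub : (edgeFinset' G).filter (fun e => ∃ x ∈ S, ∃ y, y ∉ S ∧ e = s(x, y)) ⊆
      F ∪ (S' \ S).biUnion fun y => G.incidenceFinset y := by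
    intro e he
    obtain ⟨heG, x, hx, y, hy, rfl⟩ := Finset.mem_filter.1 he
    rw [mem_edgeFinset'] at heG
    refine Finset.mem_union.2 (or_iff_not_imp_left.2 fun hF => Finset.mem_biUnion.2 ⟨y, ?_, ?_⟩)
    · exact Finset.mem_sdiff.2 ⟨mem_thickening_succ hx
        (SimpleGraph.deleteEdges_adj.2 ⟨heG, by simpa using hF⟩), hy⟩
    · exact (G.mem_incidenceFinset y _).2 ⟨heG, Sym2.mem_mk_right x y⟩
  have hcut : cutCard G S ≤ F.card + (S' \ S).card * d :=
    (Finset.card_le_card hsub).trans <| (Finset.card_union_le _ _).trans <|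
      Nat.add_le_add_left (Finset.card_biUnion_le_card_mul _ _ _ fun v _ =>
        (G.card_incidenceFinset_eq_degree v).trans_le (hd v)) _
  have hcard : (S' \ S).card + S.card = S'.card :=
    Finset.card_sdiff_add_card_eq_card (thickening_subset_succ _ _ _)
  rw [← hcard]
  linarith

lemma IsExpander.half_lt_card_thickening (hG : IsExpander G b d) (hb : 0 < b) (hd : 0 < d)
    {F : Finset (Sym2 W)} (hF : F.card ≤ b * r / 2) (hA : r ≤ A.card)
    (hK : d * (Fintype.card W : ℝ) < K * (b * r)) :
    (Fintype.card W : ℝ) / 2 < (thickening (G.deleteEdges F) A K).card := by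
  have hgrowth : ∀ k : ℕ, (Fintype.card W : ℝ) / 2 < (thickening (G.deleteEdges F) A k).card ∨
      k * (b * r / 2) ≤ d * (thickening (G.deleteEdges F) A k).card := by
    intro k
    induction k with
    | zero => right; simp only [Nat.cast_zero, zero_mul]; positivity
    | succ k ih =>
      rcases lt_or_ge ((Fintype.card W : ℝ) / 2) (thickening (G.deleteEdges F) A k).card
        with hbig | hsmall
      · exact .inl (hbig.trans_le (mod_cast Finset.card_le_card (thickening_subset_succ _ _ _)))
      have hcut : (cutCard G (thickening (G.deleteEdges F) A k) : ℝ) +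
          d * (thickening (G.deleteEdges F) A k).card ≤
            F.card + d * (thickening (G.deleteEdges F) A (k + 1)).card :=
        mod_cast cutCard_thickening_add_le hG.degree_le F A k
      have hexp : b * r ≤ cutCard G (thickening (G.deleteEdges F) A k) := by
        refine le_trans ?_ (hG.2 _ hsmall)
        gcongr
        exact hA.trans (mod_cast Finset.card_le_card (subset_thickening _ _ _))
      have hprev := ih.resolve_left hsmall.not_gt
      right
      push_cast
      linarith
  refine (hgrowth K).elim id fun h => ?_
  by_contra! hhalf
  have := mul_le_mul_of_nonneg_left hhalf (Nat.cast_nonneg' (α := ℝ) d)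
  linarith

lemma IsExpander.exists_short_walk (hG : IsExpander G b d) (hb : 0 < b) (hd : 0 < d)
    {F : Finset (Sym2 W)} (hF : F.card ≤ b * r / 2) (hA : r ≤ A.card) (hB : r ≤ B.card)
    (hK : d * (Fintype.card W : ℝ) < K * (b * r)) :
    ∃ x ∈ A, ∃ y ∈ B, ∃ w : (G.deleteEdges F).Walk x y, w.length ≤ 2 * K := by
  have hcard : Fintype.card W <
      (thickening (G.deleteEdges F) A K).card + (thickening (G.deleteEdges F) B K).card := by
    rw [← Nat.cast_lt (α := ℝ), Nat.cast_add]
    linarith [hG.half_lt_card_thickening hb hd hF hA hK, hG.half_lt_card_thickening hb hd hF hB hK]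
  obtain ⟨z, hz⟩ := Finset.inter_nonempty_of_card_lt_card_add_card (Finset.subset_univ _)
    (Finset.subset_univ _) (Finset.card_univ.trans_lt hcard)
  rw [Finset.mem_inter] at hz
  obtain ⟨x, hx, w, hw⟩ := mem_thickening.1 hz.1
  obtain ⟨y, hy, w', hw'⟩ := mem_thickening.1 hz.2
  refine ⟨x, hx, y, hy, w.append w'.reverse, ?_⟩
  rw [SimpleGraph.Walk.length_append, SimpleGraph.Walk.length_reverse]
  omega

lemma exists_pairwiseDisjoint_of_forall_exists_disjoint {α : Type*} {Q : Finset α → Prop}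
    {L m : ℕ} (h : ∀ F : Finset α, F.card ≤ m * L → ∃ P, Q P ∧ P.card ≤ L ∧ Disjoint P F) :
    ∃ P : ℕ → Finset α, (∀ i ∈ Finset.range m, Q (P i) ∧ (P i).card ≤ L) ∧
      (Finset.range m : Set ℕ).PairwiseDisjoint P := by
  induction m with
  | zero => exact ⟨fun _ => ∅, by simp, by simp⟩
  | succ m ih =>
    obtain ⟨P, hP, hdisj⟩ := ih fun F hF => h F (hF.trans (Nat.mul_le_mul_right L m.le_succ))
    obtain ⟨P', hQ', hcard', hdisj'⟩ := h ((Finset.range m).biUnion P) <|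
      (Finset.card_biUnion_le_card_mul _ _ L fun i hi => (hP i hi).2).trans
        (Nat.mul_le_mul_right L (by simp))
    have hupdate : ∀ i ∈ Finset.range m, Function.update P m P' i = P i := fun i hi =>
      Function.update_of_ne (Finset.mem_range.1 hi).ne _ _
    refine ⟨Function.update P m P', ?_, ?_⟩
    · rw [Finset.range_add_one, Finset.forall_mem_insert, Function.update_self]
      exact ⟨⟨hQ', hcard'⟩, fun i hi => (hupdate i hi).symm ▸ hP i hi⟩
    · rw [Finset.range_add_one, Finset.coe_insert, Set.pairwiseDisjoint_insert_of_notMem (by simp)]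
      refine ⟨fun i hi j hj hij => ?_, fun i hi => ?_⟩
      · simpa only [Function.onFun, hupdate i hi, hupdate j hj] using hdisj hi hj hij
      · rw [Function.update_self, hupdate i hi]
        exact hdisj'.mono_right (Finset.subset_biUnion_of_mem P hi)

lemma IsExpander.bernProb_not_reachable_le (hG : IsExpander G b d) (hb : 0 < b) (hd : 0 < d)
    {δ : ℝ} (hδ : δ ∈ Set.Icc (0 : ℝ) 1) (hA : r ≤ A.card) (hB : r ≤ B.card)
    (hK : d * (Fintype.card W : ℝ) < K * (b * r)) {m : ℕ} (hm : m * (2 * K : ℝ) ≤ b * r / 2) :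
    bernProb δ (edgeFinset' G) (fun t => ¬ ∃ x ∈ A, ∃ y ∈ B, (openGraph t).Reachable x y) ≤
      (1 - δ ^ (2 * K)) ^ m := by
  obtain ⟨P, hP, hdisj⟩ := exists_pairwiseDisjoint_of_forall_exists_disjoint (m := m) (L := 2 * K)
    (Q := fun P => P ⊆ edgeFinset' G ∧ ∃ x ∈ A, ∃ y ∈ B, (openGraph P).Reachable x y) <| by
      intro F hF
      obtain ⟨x, hx, y, hy, w, hw⟩ := hG.exists_short_walk hb hd
        (le_trans (mod_cast hF) hm) hA hB hK
      have hedges : ∀ e ∈ w.edges, e ∈ G.edgeSet ∧ e ∉ F := fun e he => by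
        simpa using w.edges_subset_edgeSet he
      refine ⟨w.edges.toFinset, ⟨fun e he => mem_edgeFinset'.2
        (hedges e (List.mem_toFinset.1 he)).1, x, hx, y, hy, ?_⟩, ?_, ?_⟩
      · refine (w.transfer (openGraph w.edges.toFinset) fun e he => ?_).reachable
        rw [openGraph, SimpleGraph.edgeSet_fromEdgeSet]
        exact ⟨List.mem_toFinset.2 he, G.not_isDiag_of_mem_edgeSet (hedges e he).1⟩
      · exact (List.toFinset_card_le _).trans (w.length_edges.trans_le hw)
      · exact Finset.disjoint_left.2 fun e he => (hedges e (List.mem_toFinset.1 he)).2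
  have hdep : ∀ i ∈ Finset.range m, DepOn (P i) fun t => ¬ P i ⊆ t := fun i _ _ _ hs =>
    congrArg Not <| propext <| forall₂_congr hs
  calc bernProb δ (edgeFinset' G) (fun t => ¬ ∃ x ∈ A, ∃ y ∈ B, (openGraph t).Reachable x y)
      ≤ bernProb δ (edgeFinset' G) (fun t => ∀ i ∈ Finset.range m, ¬ P i ⊆ t) := by
        refine bernProb_mono hδ fun t _ ht i hi hsub => ht ?_
        obtain ⟨-, x, hx, y, hy, hxy⟩ := (hP i hi).1
        exact ⟨x, hx, y, hy, hxy.mono (openGraph_mono hsub)⟩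
    _ = ∏ i ∈ Finset.range m, (1 - δ ^ (P i).card) := by
        rw [bernProb_forall_of_depOn hdep hdisj]
        exact Finset.prod_congr rfl fun i hi => by
          rw [bernProb_not, bernProb_subset δ (hP i hi).1.1]
    _ ≤ (1 - δ ^ (2 * K)) ^ m := by
        rw [← Finset.card_range m, ← Finset.prod_const, Finset.card_range]
        exact Finset.prod_le_prod (fun i _ => sub_nonneg.2 (pow_le_one₀ hδ.1 hδ.2)) fun i hi =>
          sub_le_sub_left (pow_le_pow_of_le_one hδ.1 hδ.2 (hP i hi).2) 1

end Expansion

section Merging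

variable {W : Type} [Fintype W] {b r δ : ℝ} {d : ℕ}

/-- The components of `H` with at least `M` vertices. -/
def bigComps (H : SimpleGraph W) (M : ℕ) : Finset H.ConnectedComponent :=
  {c | M ≤ (compVerts H c).card}

/-- The union of the components of `H` that belong to `X`. -/
def vertsOf (H : SimpleGraph W) (X : Finset H.ConnectedComponent) : Finset W :=
  {v | H.connectedComponentMk v ∈ X}

/-- However the components of `H` with at least `M` vertices are divided into two families
covering at least `r` vertices each, the open edges in `t` connect the two families. -/
def JoinsBigComps (H : SimpleGraph W) (M : ℕ) (r : ℝ) (t : Finset (Sym2 W)) : Prop :=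
  ∀ X ⊆ bigComps H M, r ≤ (vertsOf H X).card → r ≤ (vertsOf H (bigComps H M \ X)).card →
    ∃ x ∈ vertsOf H X, ∃ y ∈ vertsOf H (bigComps H M \ X), (openGraph t).Reachable x y

lemma mem_bigComps {H : SimpleGraph W} {M : ℕ} {c : H.ConnectedComponent} :
    c ∈ bigComps H M ↔ M ≤ (compVerts H c).card := by
  simp [bigComps]

lemma mem_vertsOf {H : SimpleGraph W} {X : Finset H.ConnectedComponent} {v : W} :
    v ∈ vertsOf H X ↔ H.connectedComponentMk v ∈ X := by
  simp [vertsOf]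

lemma exists_card_le_card_fiber_add {α ι : Type*} {U : Finset α} {f : α → ι} {r : ℝ} (hr : 0 < r)
    (hU : r ≤ U.card) (h : ∀ X : Finset ι, r ≤ (U.filter (f · ∈ X)).card →
      ((U.filter (f · ∉ X)).card : ℝ) < r) :
    ∃ c, (U.card : ℝ) ≤ (U.filter (f · = c)).card + 2 * r := by
  by_contra! hfiber
  have hsmall : ∀ X : Finset ι, ((U.filter (f · ∈ X)).card : ℝ) < r := by
    intro X
    induction X using Finset.induction_on with
    | empty => simpa using hr
    | insert c X _ ih =>
      by_contra! hlarge
      have hcover : U ⊆ U.filter (f · = c) ∪ U.filter (f · ∈ X) ∪ U.filter (f · ∉ insert c X) := by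
        intro v hv
        simp only [Finset.mem_union, Finset.mem_filter, Finset.mem_insert, hv, true_and]
        tauto
      have hcard : (U.card : ℝ) ≤ (U.filter (f · = c)).card + (U.filter (f · ∈ X)).card +
          (U.filter (f · ∉ insert c X)).card :=
        mod_cast (Finset.card_le_card hcover).trans ((Finset.card_union_le _ _).trans
          (Nat.add_le_add_right (Finset.card_union_le _ _) _))
      linarith [h _ hlarge, hfiber c]
  have hall := hsmall (U.image f)
  rw [Finset.filter_true_of_mem fun v hv => Finset.mem_image_of_mem f hv] at hall
  exact hall.not_ge hU

lemma JoinsBigComps.exists_comp {H H' : SimpleGraph W} {t : Finset (Sym2 W)} {M : ℕ}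
    (hjoin : JoinsBigComps H M r t) (hH : H ≤ H') (ht : openGraph t ≤ H') (hr : 0 < r)
    (hU : r ≤ (vertsOf H (bigComps H M)).card) : ∃ c : H'.ConnectedComponent,
      ((vertsOf H (bigComps H M)).card : ℝ) ≤ (compVerts H' c).card + 2 * r := by
  obtain ⟨c, hc⟩ := exists_card_le_card_fiber_add (f := H'.connectedComponentMk) hr hU <| by
    intro X hX
    set Y := (bigComps H M).filter fun c => c.map (.ofLE hH) ∈ X
    have hin : vertsOf H Y = (vertsOf H (bigComps H M)).filter (H'.connectedComponentMk · ∈ X) := by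
      ext v; simp [Y, mem_vertsOf]
    have hout : vertsOf H (bigComps H M \ Y) =
        (vertsOf H (bigComps H M)).filter (H'.connectedComponentMk · ∉ X) := by
      ext v; simp +contextual [Y, mem_vertsOf, and_congr_right_iff]
    by_contra! hX'
    rw [← hin] at hX
    rw [← hout] at hX'
    obtain ⟨x, hx, y, hy, hxy⟩ := hjoin Y (Finset.filter_subset _ _) hX hX'
    rw [hin, Finset.mem_filter] at hx
    rw [hout, Finset.mem_filter] at hy
    exact hy.2 (SimpleGraph.ConnectedComponent.sound (hxy.mono ht) ▸ hx.2)
  refine ⟨c, hc.trans (by gcongr; exact fun v hv => mem_compVerts.2 (Finset.mem_filter.1 hv).2)⟩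

lemma card_bigComps_mul_le (H : SimpleGraph W) (M : ℕ) :
    (bigComps H M).card * M ≤ Fintype.card W := by
  calc (bigComps H M).card * M
      ≤ ∑ c ∈ bigComps H M, (compVerts H c).card := by
        rw [← smul_eq_mul]
        exact Finset.card_nsmul_le_sum _ _ _ fun c hc => mem_bigComps.1 hc
    _ = ((bigComps H M).biUnion (compVerts H)).card :=
        (Finset.card_biUnion fun c _ c' _ hcc' => Finset.disjoint_left.2 fun v hv hv' =>
          hcc' ((mem_compVerts.1 hv).symm.trans (mem_compVerts.1 hv'))).symm
    _ ≤ Fintype.card W := Finset.card_le_univ _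

lemma card_bigComps_le (H : SimpleGraph W) {M : ℕ} {x : ℝ} (hx : 0 ≤ x) (hM : 1 ≤ M * x) :
    (bigComps H M).card ≤ x * Fintype.card W := by
  calc ((bigComps H M).card : ℝ)
      ≤ (bigComps H M).card * (M * x) := le_mul_of_one_le_right (Nat.cast_nonneg _) hM
    _ = x * ((bigComps H M).card * M : ℕ) := by push_cast; ring
    _ ≤ x * Fintype.card W := by gcongr; exact card_bigComps_mul_le H M

lemma IsExpander.bernProb_not_joinsBigComps_le {G : SimpleGraph W} (hG : IsExpander G b d)
    (hb : 0 < b) (hd : 0 < d) (hδ : δ ∈ Set.Icc (0 : ℝ) 1) {K m : ℕ}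
    (hK : d * (Fintype.card W : ℝ) < K * (b * r)) (hm : m * (2 * K : ℝ) ≤ b * r / 2)
    (H : SimpleGraph W) (M : ℕ) :
    bernProb δ (edgeFinset' G) (fun t => ¬ JoinsBigComps H M r t) ≤
      2 ^ (bigComps H M).card * (1 - δ ^ (2 * K)) ^ m := by
  set I := (bigComps H M).powerset.filter fun X =>
    r ≤ (vertsOf H X).card ∧ r ≤ (vertsOf H (bigComps H M \ X)).card
  calc bernProb δ (edgeFinset' G) (fun t => ¬ JoinsBigComps H M r t)
      ≤ bernProb δ (edgeFinset' G) (fun t => ∃ X ∈ I, ¬ ∃ x ∈ vertsOf H X,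
          ∃ y ∈ vertsOf H (bigComps H M \ X), (openGraph t).Reachable x y) := by
        refine bernProb_mono hδ fun t _ ht => ?_
        by_contra! h
        exact ht fun X hX h₁ h₂ =>
          h X (Finset.mem_filter.2 ⟨Finset.mem_powerset.2 hX, h₁, h₂⟩)
    _ ≤ ∑ X ∈ I, (1 - δ ^ (2 * K)) ^ m :=
        (bernProb_exists_le hδ I _).trans <| Finset.sum_le_sum fun X hX =>
          hG.bernProb_not_reachable_le hb hd hδ (Finset.mem_filter.1 hX).2.1
            (Finset.mem_filter.1 hX).2.2 hK hm
    _ ≤ 2 ^ (bigComps H M).card * (1 - δ ^ (2 * K)) ^ m := by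
        rw [Finset.sum_const, nsmul_eq_mul]
        refine mul_le_mul_of_nonneg_right ?_
          (pow_nonneg (sub_nonneg.2 (pow_le_one₀ hδ.1 hδ.2)) m)
        exact_mod_cast (Finset.card_filter_le _ _).trans (Finset.card_powerset _).le

lemma two_pow_le_exp {m : ℕ} {x : ℝ} (h : m ≤ x) : (2 : ℝ) ^ m ≤ Real.exp x :=
  calc (2 : ℝ) ^ m ≤ Real.exp 1 ^ m := by gcongr; linarith [Real.add_one_le_exp 1]
    _ ≤ Real.exp x := by rwa [← Real.exp_nat_mul, mul_one, Real.exp_le_exp]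

lemma one_sub_pow_floor_le {a : ℝ} (ha : 0 ≤ a) (ha1 : a ≤ 1) (x : ℝ) :
    (1 - a) ^ ⌊x⌋₊ ≤ Real.exp (1 - a * x) :=
  calc (1 - a) ^ ⌊x⌋₊ ≤ Real.exp (-a) ^ ⌊x⌋₊ :=
        pow_le_pow_left₀ (sub_nonneg.2 ha1) (Real.one_sub_le_exp_neg a) _
    _ ≤ Real.exp (1 - a * x) := by
        rw [← Real.exp_nat_mul, Real.exp_le_exp]
        nlinarith [Nat.lt_floor_add_one x]

lemma exists_bernProb_not_joinsBigComps_le (hb : 0 < b) (hd : 0 < d) (hδ : δ ∈ Set.Ioc (0 : ℝ) 1)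
    (hr : 0 < r) : ∃ ρ > 0, ∃ M₀ : ℕ, ∀ {W : Type} [Fintype W] [Nonempty W] {G : SimpleGraph W},
      IsExpander G b d → ∀ H : SimpleGraph W, ∀ M ≥ M₀,
        bernProb δ (edgeFinset' G) (fun t => ¬ JoinsBigComps H M (r * Fintype.card W) t) ≤
          Real.exp 1 * Real.exp (-ρ * Fintype.card W) := by
  obtain ⟨K, hK⟩ := exists_nat_gt (d / (b * r))
  have hK0 : (0 : ℝ) < K := lt_of_le_of_lt (by positivity) hK
  rw [div_lt_iff₀ (by positivity)] at hK
  set a := δ ^ (2 * K)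
  set z := b * r / (4 * K)
  have ha : 0 < a := pow_pos hδ.1 _
  have ha1 : a ≤ 1 := pow_le_one₀ hδ.1.le hδ.2
  have hz : 0 < a * z / 2 := by positivity
  obtain ⟨M₀, hM₀⟩ := exists_nat_ge (1 / (a * z / 2))
  rw [div_le_iff₀ hz] at hM₀
  refine ⟨a * z / 2, hz, M₀, fun {W} _ _ {G} hG H M hM => ?_⟩
  set n := (Fintype.card W : ℝ)
  have hn : 0 < n := Nat.cast_pos.2 Fintype.card_pos
  have hfloor : (⌊z * n⌋₊ : ℝ) * (2 * K) ≤ b * (r * n) / 2 :=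
    calc (⌊z * n⌋₊ : ℝ) * (2 * K) ≤ z * n * (2 * K) := by
          gcongr; exact Nat.floor_le (by positivity)
      _ = b * (r * n) / 2 := by simp only [z]; field_simp; norm_num
  have hcomps : (bigComps H M).card ≤ a * z / 2 * n :=
    card_bigComps_le H hz.le (hM₀.trans (by gcongr))
  calc bernProb δ (edgeFinset' G) (fun t => ¬ JoinsBigComps H M (r * n) t)
      ≤ 2 ^ (bigComps H M).card * (1 - a) ^ ⌊z * n⌋₊ :=
        hG.bernProb_not_joinsBigComps_le hb hd ⟨hδ.1.le, hδ.2⟩ (by nlinarith) hfloor H M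
    _ ≤ Real.exp (a * z / 2 * n) * Real.exp (1 - a * (z * n)) := by
        gcongr
        · exact two_pow_le_exp hcomps
        · exact one_sub_pow_floor_le ha.le ha1 _
    _ = Real.exp 1 * Real.exp (-(a * z / 2) * n) := by
        rw [← Real.exp_add, ← Real.exp_add]
        ring_nf

end Merging

section Extinction

variable {p a u : ℝ} {m : ℕ}

lemma geom_sum_lt_geom_sum {x y : ℝ} (hx : 0 ≤ x) (hxy : x < y) (hm : 2 ≤ m) :
    ∑ i ∈ Finset.range m, x ^ i < ∑ i ∈ Finset.range m, y ^ i :=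
  Finset.sum_lt_sum (fun i _ => pow_le_pow_left₀ hx hxy.le i)
    ⟨1, Finset.mem_range.2 hm, by simpa using hxy⟩

lemma mul_geom_sum_eq_one_iff (ha : a ≠ 1) :
    p * ∑ i ∈ Finset.range m, a ^ i = 1 ↔ a = 1 - p + p * a ^ m := by
  rw [← mul_right_inj' (sub_ne_zero.2 ha.symm), ← mul_left_comm, mul_neg_geom_sum]
  constructor <;> intro h <;> linarith

lemma extinctProb_nonneg (hp : p ∈ Set.Icc (0 : ℝ) 1) (m k : ℕ) : 0 ≤ extinctProb p m k := by
  induction k with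
  | zero => exact sub_nonneg.2 hp.2
  | succ k ih => exact add_nonneg (sub_nonneg.2 hp.2) (mul_nonneg hp.1 (pow_nonneg ih m))

lemma extinctProb_le (hp : p ∈ Set.Icc (0 : ℝ) 1) (ha : 0 ≤ a) (h : 1 - p + p * a ^ m ≤ a)
    (k : ℕ) : extinctProb p m k ≤ a := by
  refine le_trans ?_ h
  induction k with
  | zero => exact le_add_of_nonneg_right (mul_nonneg hp.1 (pow_nonneg ha m))
  | succ k ih =>
    have hpow := pow_le_pow_left₀ (extinctProb_nonneg hp m k) (ih.trans h) m
    exact add_le_add_right (mul_le_mul_of_nonneg_left hpow hp.1) _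

lemma monotone_extinctProb (hp : p ∈ Set.Icc (0 : ℝ) 1) (m : ℕ) :
    Monotone (extinctProb p m) := by
  refine monotone_nat_of_le_succ fun k => ?_
  induction k with
  | zero =>
    exact le_add_of_nonneg_right (mul_nonneg hp.1 (pow_nonneg (extinctProb_nonneg hp m 0) m))
  | succ k ih =>
    exact add_le_add_right (mul_le_mul_of_nonneg_left
      (pow_le_pow_left₀ (extinctProb_nonneg hp m k) ih m) hp.1) _

lemma tendsto_extinctProb (hp0 : 0 < p) (hp1 : p ≤ 1) (hm : 2 ≤ m) (ha0 : 0 ≤ a) (ha1 : a < 1)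
    (ha : a = 1 - p + p * a ^ m) : Filter.Tendsto (extinctProb p m) Filter.atTop (nhds a) := by
  have hp : p ∈ Set.Icc (0 : ℝ) 1 := ⟨hp0.le, hp1⟩
  have hle := extinctProb_le hp ha0 ha.symm.le
  obtain ⟨l, hl⟩ : ∃ l, Filter.Tendsto (extinctProb p m) Filter.atTop (nhds l) :=
    ⟨_, tendsto_atTop_ciSup (monotone_extinctProb hp m) ⟨a, Set.forall_mem_range.2 hle⟩⟩
  have hla : l ≤ a := le_of_tendsto' hl hle
  have hl0 : 0 ≤ l := ge_of_tendsto' hl (extinctProb_nonneg hp m)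
  have hfix : l = 1 - p + p * l ^ m :=
    tendsto_nhds_unique (hl.comp (Filter.tendsto_add_atTop_nat 1))
      (((hl.pow m).const_mul p).const_add (1 - p))
  rcases hla.lt_or_eq with hlt | rfl
  · have hsum := mul_lt_mul_of_pos_left (geom_sum_lt_geom_sum hl0 hlt hm) hp0
    rw [(mul_geom_sum_eq_one_iff ha1.ne).2 ha,
      (mul_geom_sum_eq_one_iff (hlt.trans ha1).ne).2 hfix] at hsum
    exact absurd hsum (lt_irrefl 1)
  · exact hl

lemma exists_lt_extinctProb_le (hp0 : 0 < p) (hp1 : p ≤ 1) (hm : 2 ≤ m) (ha0 : 0 ≤ a)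
    (ha : a = 1 - p + p * a ^ m) (hau : a < u) (hu1 : u < 1) :
    ∃ p' : ℝ, 0 < p' ∧ p' < p ∧ ∀ k, extinctProb p' m k ≤ u := by
  have hsum := mul_lt_mul_of_pos_left (geom_sum_lt_geom_sum ha0 hau hm) hp0
  rw [(mul_geom_sum_eq_one_iff (hau.trans hu1).ne).2 ha] at hsum
  set S := ∑ i ∈ Finset.range m, u ^ i
  have hS0 : 0 < S := pos_of_mul_pos_right (zero_lt_one.trans hsum) hp0.le
  have hp' : S⁻¹ < p := (inv_lt_iff_one_lt_mul₀ hS0).2 hsum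
  have hfix := (mul_geom_sum_eq_one_iff hu1.ne).1 (inv_mul_cancel₀ hS0.ne')
  exact ⟨S⁻¹, inv_pos.2 hS0, hp', extinctProb_le ⟨(inv_pos.2 hS0).le, (hp'.trans_le hp1).le⟩
    (ha0.trans hau.le) hfix.symm.le⟩

lemma exists_sprinkling (hp0 : 0 < p) (hp1 : p ≤ 1) (hm : 2 ≤ m) (ha0 : 0 ≤ a) (ha1 : a < 1)
    (ha : a = 1 - p + p * a ^ m) (n : ℕ) {r : ℝ} (hr : 0 < r) :
    ∃ p' ∈ Set.Icc (0 : ℝ) 1, ∃ δ ∈ Set.Ioc (0 : ℝ) 1, 1 - (1 - p') * (1 - δ) = p ∧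
      ∀ k, extinctProb p' m k ^ n ≤ a ^ n + r := by
  have hcont : ∀ᶠ u in nhdsWithin a (Set.Ioi a), u ^ n < a ^ n + r :=
    nhdsWithin_le_nhds ((continuous_pow n).continuousAt.eventually_lt_const
      (lt_add_of_pos_right _ hr))
  obtain ⟨u, hur, hau, hu1⟩ := (hcont.and (Ioo_mem_nhdsGT ha1)).exists
  obtain ⟨p', hp'0, hp'p, hext⟩ := exists_lt_extinctProb_le hp0 hp1 hm ha0 ha hau hu1
  have hp' : p' ∈ Set.Icc (0 : ℝ) 1 := ⟨hp'0.le, hp'p.le.trans hp1⟩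
  have hp'1 : 0 < 1 - p' := sub_pos.2 (hp'p.trans_le hp1)
  refine ⟨p', hp', (p - p') / (1 - p'), ⟨div_pos (sub_pos.2 hp'p) hp'1, ?_⟩, ?_, fun k => ?_⟩
  · exact (div_le_one hp'1).2 (sub_le_sub_right hp1 p')
  · field_simp
    ring
  · exact (pow_le_pow_left₀ (extinctProb_nonneg hp' m k) (hext k) n).trans hur.le

end Extinction

section Assembly

variable {W : Type} [Fintype W] {G : SimpleGraph W} {d k : ℕ} {p p' δ r : ℝ}

lemma le_bernProb_of_sprinkle {α : Type*} [DecidableEq α] {E : Finset α} {x₁ x₂ x₃ : ℝ}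
    (hp' : p' ∈ Set.Icc (0 : ℝ) 1) (hδ : δ ∈ Set.Icc (0 : ℝ) 1) (hp : 1 - (1 - p') * (1 - δ) = p)
    {Q A B : Finset α → Prop} {D : Finset α → Finset α → Prop} (hA : bernProb p E A ≤ x₁)
    (hB : bernProb p' E B ≤ x₂) (hD : ∀ s, bernProb δ E (D s) ≤ x₃)
    (h : ∀ s ⊆ E, ∀ t ⊆ E, ¬ A (s ∪ t) → ¬ B s → ¬ D s t → Q (s ∪ t)) :
    1 - (x₁ + x₂ + x₃) ≤ bernProb p E Q := by
  have hround : ∀ s ⊆ E, bernProb δ E (fun t => ¬ Q (s ∪ t)) ≤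
      bernProb δ E (fun t => A (s ∪ t)) + ((if B s then 1 else 0) + x₃) := fun s hs =>
    calc bernProb δ E (fun t => ¬ Q (s ∪ t))
        ≤ bernProb δ E (fun t => A (s ∪ t) ∨ B s ∨ D s t) :=
          bernProb_mono hδ fun t ht hQ => by
            by_contra! hnone
            exact hQ (h s hs t ht hnone.1 hnone.2.1 hnone.2.2)
      _ ≤ bernProb δ E (fun t => A (s ∪ t)) +
            (bernProb δ E (fun _ => B s) + bernProb δ E (D s)) :=
          (bernProb_or_le hδ _ _).trans (add_le_add_right (bernProb_or_le hδ _ _) _)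
      _ ≤ bernProb δ E (fun t => A (s ∪ t)) + ((if B s then 1 else 0) + x₃) := by
          gcongr
          · exact (bernExp_const δ E _).le
          · exact hD s
  have hfail : bernProb p E (fun u => ¬ Q u) ≤ x₁ + (x₂ + x₃) :=
    calc bernProb p E (fun u => ¬ Q u)
        = bernExp p' E (fun s => bernProb δ E fun t => ¬ Q (s ∪ t)) := by
          rw [bernProb, ← hp, ← bernExp_sprinkle]; rfl
      _ ≤ bernExp p' E (fun s =>
            bernProb δ E (fun t => A (s ∪ t)) + ((if B s then 1 else 0) + x₃)) :=
          bernExp_mono hp' hround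
      _ = bernProb p E A + (bernProb p' E B + x₃) := by
          rw [bernExp_add, bernExp_add, bernExp_const, bernProb, ← hp, ← bernExp_sprinkle]; rfl
      _ ≤ x₁ + (x₂ + x₃) := by gcongr
  rw [bernProb_not] at hfail
  linarith

lemma percProb_mono (hp : p ∈ Set.Icc (0 : ℝ) 1) {P Q : SimpleGraph W → Prop}
    (h : ∀ H, P H → Q H) : percProb G p P ≤ percProb G p Q :=
  bernProb_mono hp fun s _ => h (openGraph s)

lemma IsLargestComp.card_longVerts_le {s t : Finset (Sym2 W)} (hs : s ⊆ edgeFinset' G)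
    (hk : ((k + 2 : ℕ) : ℕ∞) < G.egirth) (hr : 0 < r) (hlong : r ≤ (longVerts G k s).card)
    (hjoin : JoinsBigComps (openGraph s) (k + 2) r t)
    {c : (openGraph (s ∪ t)).ConnectedComponent} (hc : IsLargestComp (openGraph (s ∪ t)) c) :
    ((longVerts G k s).card : ℝ) ≤ (compVerts (openGraph (s ∪ t)) c).card + 2 * r := by
  have hsub : longVerts G k s ⊆ vertsOf (openGraph s) (bigComps (openGraph s) (k + 2)) :=
    fun v hv => mem_vertsOf.2 <| mem_bigComps.2 <|
      HasLongBranch.le_card_compVerts hs hk (Finset.mem_filter.1 hv).2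
  have hcard : ((longVerts G k s).card : ℝ) ≤
      (vertsOf (openGraph s) (bigComps (openGraph s) (k + 2))).card :=
    mod_cast Finset.card_le_card hsub
  obtain ⟨c', hc'⟩ := hjoin.exists_comp (openGraph_mono Finset.subset_union_left)
    (openGraph_mono Finset.subset_union_right) hr (hlong.trans hcard)
  have hlargest : ((compVerts _ c').card : ℝ) ≤ (compVerts _ c).card := mod_cast hc c'
  linarith

lemma IsLargestComp.abs_card_sub_le {s t : Finset (Sym2 W)} {x y : ℝ} (hd : ∀ v, G.degree v ≤ d)
    (hk : ((k + 2 : ℕ) : ℕ∞) < G.egirth) (hs : s ⊆ edgeFinset' G) (ht : t ⊆ edgeFinset' G)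
    (hr : 0 < r) (hbig : (d + 1) ^ k + 3 * r ≤ x)
    (hlong : |((longVerts G k (s ∪ t)).card : ℝ) - x| < r)
    (hdegree : |(longDegree G k (s ∪ t) : ℝ) - y| < r)
    (hfirst : x - r < (longVerts G k s).card) (hjoin : JoinsBigComps (openGraph s) (k + 2) r t)
    {c : (openGraph (s ∪ t)).ConnectedComponent} (hc : IsLargestComp (openGraph (s ∪ t)) c) :
    |((compVerts _ c).card : ℝ) - x| ≤ 3 * r ∧
      |2 * ((compEdges _ c).card : ℝ) - y| ≤ (4 * d + 1) * r := by
  rw [abs_lt] at hlong hdegree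
  have hst := Finset.union_subset hs ht
  have hpow : (0 : ℝ) < (d + 1) ^ k := by positivity
  have hlower := hc.card_longVerts_le hs hk hr (by linarith) hjoin
  have hsub : compVerts _ c ⊆ longVerts G k (s ∪ t) := by
    refine compVerts_subset_longVerts hd hst ?_
    rw [← Nat.cast_lt (α := ℝ)]
    push_cast
    linarith
  have hcard := Finset.card_le_card hsub
  have hupper : ((compVerts _ c).card : ℝ) ≤ (longVerts G k (s ∪ t)).card := mod_cast hcard
  have hedges : (2 * (compEdges _ c).card : ℝ) ≤ longDegree G k (s ∪ t) :=
    mod_cast two_mul_card_compEdges_le_longDegree hst hsub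
  have hedges' : (longDegree G k (s ∪ t) : ℝ) ≤ 2 * (compEdges _ c).card +
      d * ((longVerts G k (s ∪ t)).card - (compVerts _ c).card) := by
    rw [← Nat.cast_sub hcard]
    exact_mod_cast longDegree_le hd hst hsub
  have hmissing : (d : ℝ) * ((longVerts G k (s ∪ t)).card - (compVerts _ c).card) ≤
      d * (4 * r) := by
    gcongr
    linarith
  exact ⟨abs_le.2 ⟨by linarith, by linarith⟩,
    abs_le.2 ⟨by linarith, by linarith [show 0 ≤ d * r by positivity]⟩⟩

lemma le_percProb_largestComp {x y e₁ e₂ e₃ e₄ : ℝ} (hd : ∀ v, G.degree v ≤ d)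
    (hk : ((k + 2 : ℕ) : ℕ∞) < G.egirth) (hp' : p' ∈ Set.Icc (0 : ℝ) 1)
    (hδ : δ ∈ Set.Icc (0 : ℝ) 1) (hp : p ∈ Set.Icc (0 : ℝ) 1) (hsplit : 1 - (1 - p') * (1 - δ) = p)
    (hr : 0 < r) (hbig : (d + 1) ^ k + 3 * r ≤ x)
    (hlong : bernProb p (edgeFinset' G) (fun u => r ≤ |((longVerts G k u).card : ℝ) - x|) ≤ e₁)
    (hdegree : bernProb p (edgeFinset' G) (fun u => r ≤ |(longDegree G k u : ℝ) - y|) ≤ e₂)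
    (hfirst : bernProb p' (edgeFinset' G) (fun s => (longVerts G k s).card ≤ x - r) ≤ e₃)
    (hjoin : ∀ H, bernProb δ (edgeFinset' G) (fun t => ¬ JoinsBigComps H (k + 2) r t) ≤ e₄) :
    1 - (e₁ + e₂ + e₃ + e₄) ≤ percProb G p fun H => ∀ c, IsLargestComp H c →
      |((compVerts H c).card : ℝ) - x| ≤ 3 * r ∧
        |2 * ((compEdges H c).card : ℝ) - y| ≤ (4 * d + 1) * r := by
  rw [percProb_eq_bernProb]
  refine le_bernProb_of_sprinkle hp' hδ hsplit
    ((bernProb_or_le hp _ _).trans (add_le_add hlong hdegree)) hfirst (fun s => hjoin (openGraph s))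
    fun s hs t ht hunion hfirst hjoined c hc => ?_
  push Not at hunion hfirst hjoined
  exact hc.abs_card_sub_le hd hk hs ht hr hbig hunion.1 hunion.2 hfirst hjoined

lemma girth_le_card (G : SimpleGraph W) : G.girth ≤ Fintype.card W := by
  by_cases h : G.IsAcyclic
  · rw [SimpleGraph.girth_eq_zero.2 h]
    exact Nat.zero_le _
  · obtain ⟨v, w, hw, hlen⟩ := SimpleGraph.exists_girth_eq_length.2 h
    rw [hlen]
    simpa using hw.support_nodup.length_le_card

lemma IsRegularExpander.isRegularOfDegree {b : ℝ} (hG : IsRegularExpander G b d) :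
    G.IsRegularOfDegree d := fun v => by
  rw [← G.card_neighborFinset_eq_degree, ← Set.ncard_coe_finset, G.coe_neighborFinset]
  exact hG.2 v

lemma half_mul_le_abs_sub {f y z n : ℝ} (hn : 0 ≤ n) (hyz : |z - y| < r / 2)
    (h : r * n ≤ |f - y * n|) : r / 2 * n ≤ |f - z * n| := by
  have hzn : |z * n - y * n| ≤ r / 2 * n := by
    rw [← sub_mul, abs_mul, abs_of_nonneg hn]
    gcongr
  linarith [abs_sub_le f (z * n) (y * n)]

lemma exp_neg_mul_anti {ρ ρ' n : ℝ} (hn : 0 ≤ n) (hρ : ρ ≤ ρ') :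
    Real.exp (-ρ' * n) ≤ Real.exp (-ρ * n) := by
  gcongr

lemma exists_depth {a : ℝ} (hd : 3 ≤ d) (hp0 : 0 < p) (hp1 : p ≤ 1) (ha0 : 0 ≤ a) (ha1 : a < 1)
    (ha : a = 1 - p + p * a ^ (d - 1)) (hr : 0 < r) (k₀ : ℕ) :
    ∃ k ≥ k₀, |1 - extinctProb p (d - 1) k ^ d - (1 - a ^ d)| < r ∧
      |d * (p - (extinctProb p (d - 1) k - (1 - p)) * extinctProb p (d - 1) k ^ (d - 1)) -
        d * (p - (a - (1 - p)) * a ^ (d - 1))| < r := by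
  have hlim := tendsto_extinctProb hp0 hp1 (show 2 ≤ d - 1 by omega) ha0 ha1 ha
  have hverts := Metric.tendsto_nhds.1 ((hlim.pow d).const_sub 1) r hr
  have hdegree := Metric.tendsto_nhds.1
    ((((hlim.sub_const (1 - p)).mul (hlim.pow (d - 1))).const_sub p).const_mul (d : ℝ)) r hr
  exact ((Filter.eventually_ge_atTop k₀).and (hverts.and hdegree)).exists

lemma exists_depth_concentration {a : ℝ} (hd : 3 ≤ d) (hp0 : 0 < p) (hp1 : p ≤ 1) (ha0 : 0 ≤ a)
    (ha1 : a < 1) (ha : a = 1 - p + p * a ^ (d - 1)) (hp' : p' ∈ Set.Icc (0 : ℝ) 1)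
    (hext : ∀ k, extinctProb p' (d - 1) k ^ d ≤ a ^ d + r / 2) (hr : 0 < r) (k₀ : ℕ) :
    ∃ k ≥ k₀, ∃ ρ > 0, ∀ {W : Type} [Fintype W] {G : SimpleGraph W},
      G.IsRegularOfDegree d → ((2 * k + 2 : ℕ) : ℕ∞) < G.egirth →
      bernProb p (edgeFinset' G) (fun u => r * Fintype.card W ≤
        |((longVerts G k u).card : ℝ) - (1 - a ^ d) * Fintype.card W|) ≤
          2 * Real.exp (-ρ * Fintype.card W) ∧
      bernProb p (edgeFinset' G) (fun u => r * Fintype.card W ≤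
        |(longDegree G k u : ℝ) - d * (p - (a - (1 - p)) * a ^ (d - 1)) * Fintype.card W|) ≤
          2 * Real.exp (-ρ * Fintype.card W) ∧
      bernProb p' (edgeFinset' G) (fun s => (longVerts G k s).card ≤
        (1 - a ^ d) * Fintype.card W - r * Fintype.card W) ≤
          2 * Real.exp (-ρ * Fintype.card W) := by
  have hp : p ∈ Set.Icc (0 : ℝ) 1 := ⟨hp0.le, hp1⟩
  obtain ⟨k, hk, hverts, hdeg⟩ := exists_depth hd hp0 hp1 ha0 ha1 ha (half_pos hr) k₀
  obtain ⟨ρ₁, hρ₁, hlong⟩ := exists_bernProb_abs_card_longVerts_sub_le (d := d) (by omega) k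
    (half_pos hr)
  obtain ⟨ρ₂, hρ₂, hdegree⟩ := exists_bernProb_abs_longDegree_sub_le (d := d) (by omega) k
    (half_pos hr)
  refine ⟨k, hk, min ρ₁ ρ₂, lt_min hρ₁ hρ₂, fun {W} _ {G} hG hgirth => ?_⟩
  set n := (Fintype.card W : ℝ)
  have hn : 0 ≤ n := Nat.cast_nonneg _
  have hexp₁ := mul_le_mul_of_nonneg_left (exp_neg_mul_anti hn (min_le_left ρ₁ ρ₂)) zero_le_two
  have hexp₂ := mul_le_mul_of_nonneg_left (exp_neg_mul_anti hn (min_le_right ρ₁ ρ₂)) zero_le_two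
  refine ⟨(bernProb_mono hp fun u _ => half_mul_le_abs_sub hn hverts).trans
      ((hlong hp hG hgirth).trans hexp₁),
    (bernProb_mono hp fun u _ => half_mul_le_abs_sub hn hdeg).trans
      ((hdegree hp hG hgirth).trans hexp₂),
    (bernProb_mono hp' fun s _ hs => ?_).trans ((hlong hp' hG hgirth).trans hexp₁)⟩
  have hlower : (1 - a ^ d - r / 2) * n ≤ (1 - extinctProb p' (d - 1) k ^ d) * n :=
    mul_le_mul_of_nonneg_right (by linarith [hext k]) hn
  exact le_abs.2 (.inr (by linarith))

lemma exists_le_percProb_largestComp {a b : ℝ} (hd : 3 ≤ d) (hp0 : 0 < p) (hp1 : p ≤ 1)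
    (ha0 : 0 ≤ a) (ha1 : a < 1) (ha : a = 1 - p + p * a ^ (d - 1)) (hb : 0 < b) (hr : 0 < r)
    (hrd : 4 * r ≤ 1 - a ^ d) : ∃ ρ > 0, ∃ R > 0, ∀ {W : Type} [Fintype W] {G : SimpleGraph W},
      IsRegularExpander G b d → R ≤ G.girth →
      1 - (6 + Real.exp 1) * Real.exp (-ρ * Fintype.card W) ≤
        percProb G p fun H => ∀ c, IsLargestComp H c →
          |((compVerts H c).card : ℝ) - (1 - a ^ d) * Fintype.card W| ≤
            3 * (r * Fintype.card W) ∧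
          |2 * ((compEdges H c).card : ℝ) -
            d * (p - (a - (1 - p)) * a ^ (d - 1)) * Fintype.card W| ≤
              (4 * d + 1) * (r * Fintype.card W) := by
  obtain ⟨p', hp', δ, hδ, hsplit, hext⟩ :=
    exists_sprinkling hp0 hp1 (show 2 ≤ d - 1 by omega) ha0 ha1 ha d (half_pos hr)
  obtain ⟨ρ₁, hρ₁, M₀, hjoin⟩ :=
    exists_bernProb_not_joinsBigComps_le (d := d) hb (by omega) hδ hr
  obtain ⟨k, hk, ρ₂, hρ₂, hconc⟩ :=
    exists_depth_concentration hd hp0 hp1 ha0 ha1 ha hp' hext hr M₀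
  obtain ⟨N, hN⟩ := exists_nat_gt (((d : ℝ) + 1) ^ k / r)
  rw [div_lt_iff₀ hr] at hN
  refine ⟨min ρ₁ ρ₂, lt_min hρ₁ hρ₂, 2 * k + 3 + N, by omega, fun {W} _ {G} hG hgirth => ?_⟩
  have hcard : 2 * k + 3 + N ≤ Fintype.card W := hgirth.trans (girth_le_card G)
  have : Nonempty W := Fintype.card_pos_iff.1 (by omega)
  have hegirth : ∀ l ≤ 2 * k + 2, (l : ℕ∞) < G.egirth := fun l hl =>
    (Nat.cast_lt.2 (show l < G.girth by omega)).trans_le (ENat.natCast_toNat_le_self _)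
  have hbig : (d + 1) ^ k + 3 * (r * Fintype.card W) ≤ (1 - a ^ d) * Fintype.card W :=
    calc ((d : ℝ) + 1) ^ k + 3 * (r * Fintype.card W)
        ≤ Fintype.card W * r + 3 * (r * Fintype.card W) := by
          gcongr
          exact hN.le.trans (by gcongr; omega)
      _ = 4 * r * Fintype.card W := by ring
      _ ≤ (1 - a ^ d) * Fintype.card W := by gcongr
  obtain ⟨hlong, hdegree, hfirst⟩ :=
    hconc hG.isRegularOfDegree (hegirth (2 * k + 2) le_rfl)
  refine le_trans ?_ (le_percProb_largestComp hG.1.degree_le (hegirth (k + 2) (by omega)) hp'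
    (Set.Ioc_subset_Icc_self hδ) ⟨hp0.le, hp1⟩ hsplit (by positivity) hbig hlong hdegree hfirst
    fun H => hjoin hG.1 H (k + 2) (by omega))
  have hexp₁ := exp_neg_mul_anti (Fintype.card W).cast_nonneg (min_le_left ρ₁ ρ₂)
  have hexp₂ := exp_neg_mul_anti (Fintype.card W).cast_nonneg (min_le_right ρ₁ ρ₂)
  nlinarith [Real.exp_pos 1]

lemma abs_div_sub_lt {f y n ε : ℝ} (hn : 0 < n) (h : |f - y * n| ≤ r * n) (hr : r < ε) :
    |f / n - y| < ε := by
  rw [div_sub' hn.ne', abs_div, abs_of_pos hn, div_lt_iff₀ hn, mul_comm n y]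
  exact h.trans_lt (by gcongr)

lemma exists_le_percProb_largestComp_div {a b ε : ℝ} (hd : 3 ≤ d) (hp0 : 0 < p) (hp1 : p ≤ 1)
    (ha0 : 0 ≤ a) (ha1 : a < 1) (ha : a = 1 - p + p * a ^ (d - 1)) (hb : 0 < b) (hε : 0 < ε) :
    ∃ ρ > 0, ∃ R > 0, ∀ {W : Type} [Fintype W] {G : SimpleGraph W},
      IsRegularExpander G b d → R ≤ G.girth →
      1 - (6 + Real.exp 1) * Real.exp (-ρ * Fintype.card W) ≤
        percProb G p fun H => ∀ c, IsLargestComp H c →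
          |((compVerts H c).card : ℝ) / Fintype.card W - (1 - a ^ d)| < ε ∧
          |((compEdges H c).card : ℝ) / Fintype.card W -
            d * (p - (a - (1 - p)) * a ^ (d - 1)) / 2| < ε := by
  have hd0 : (3 : ℝ) ≤ d := mod_cast hd
  have hθ : 0 < 1 - a ^ d := sub_pos.2 (pow_lt_one₀ ha0 ha1 (by omega))
  obtain ⟨r, hr, hrθ, hrε⟩ : ∃ r > 0, 4 * r ≤ 1 - a ^ d ∧ 4 * d * r ≤ ε := by
    refine ⟨min ((1 - a ^ d) / 4) (ε / (4 * d)), by positivity, ?_, ?_⟩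
    · linarith [min_le_left ((1 - a ^ d) / 4) (ε / (4 * d))]
    · rw [← le_div_iff₀' (by positivity)]
      exact min_le_right _ _
  have hdr : 3 * r ≤ d * r := by gcongr
  obtain ⟨ρ, hρ, R, hR, hbound⟩ :=
    exists_le_percProb_largestComp hd hp0 hp1 ha0 ha1 ha hb hr hrθ
  refine ⟨ρ, hρ, R, hR, fun {W} _ {G} hG hgirth => (hbound hG hgirth).trans
    (percProb_mono ⟨hp0.le, hp1⟩ fun H hH c hc => ?_)⟩
  have hn : (0 : ℝ) < Fintype.card W :=
    Nat.cast_pos.2 (hR.trans_le (hgirth.trans (girth_le_card G)))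
  obtain ⟨hverts, hedges⟩ := hH c hc
  refine ⟨abs_div_sub_lt (r := 3 * r) hn (by linarith) (by linarith),
    abs_div_sub_lt (r := (4 * d + 1) * r / 2) hn ?_ (by linarith)⟩
  rw [abs_le] at hedges ⊢
  exact ⟨by linarith, by linarith⟩

end Assembly

theorem giant_component_size (d : ℕ) (hd : 3 ≤ d) (p q : ℝ)
    (hp : 1 / ((d : ℝ) - 1) < p) (hp1 : p < 1)
    (hq0 : 0 ≤ q) (hq1 : q < 1)
    (hq : q = (1 - p + p * q) ^ (d - 1))
    (ε b : ℝ) (hε : 0 < ε) (hb : 0 < b) :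
    ∃ c > (0:ℝ), ∃ C > (0:ℝ), ∃ R : ℕ, 0 < R ∧
      ∀ (V : Type) [Fintype V] [DecidableEq V] (G : SimpleGraph V),
        IsRegularExpander G b d → (R : ℕ∞) ≤ G.girth →
        1 - C * Real.exp (-c * Fintype.card V) ≤
          percProb G p (fun H =>
            ∀ c₁ : H.ConnectedComponent, IsLargestComp H c₁ →
              |((compVerts H c₁).card : ℝ) / Fintype.card V
                  - (1 - q * (1 - p) - p * q ^ 2)| < ε ∧
              |((compEdges H c₁).card : ℝ) / Fintype.card V
                  - (1 / 2 * p * d * (1 - q ^ 2))| < ε) := by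
  have hd' : (3 : ℝ) ≤ d := mod_cast hd
  have hp0 : 0 < p := (one_div_pos.2 (by linarith)).trans hp
  obtain ⟨ρ, hρ, R, hR, hbound⟩ := exists_le_percProb_largestComp_div (a := 1 - p + p * q) hd hp0
    hp1.le (by nlinarith) (by nlinarith) (by rw [← hq]) hb hε
  have hθ : 1 - (1 - p + p * q) ^ d = 1 - q * (1 - p) - p * q ^ 2 := by
    rw [← Nat.sub_add_cancel (show 1 ≤ d by omega), pow_succ, ← hq]
    ring
  have hη : d * (p - (1 - p + p * q - (1 - p)) * (1 - p + p * q) ^ (d - 1)) / 2 =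
      1 / 2 * p * d * (1 - q ^ 2) := by
    rw [← hq]
    ring
  rw [hθ, hη] at hbound
  refine ⟨ρ, hρ, 6 + Real.exp 1, by positivity, R, hR, fun V _ _ G hG hgirth => ?_⟩
  obtain rfl : ‹DecidableEq V› = fun _ _ => Classical.propDecidable _ := Subsingleton.elim _ _
  exact hbound hG (mod_cast hgirth)

end Percolation

end
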